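/- arXiv:2602.05357 — 2 statements merged into one kernel-verified Lean document; each statement's English description precedes it below -/
import Mathlib

section
/- Let θ : ℝⁿ → (−∞,+∞] be a symmetric, proper, polyhedral convex function (its epigraph is a polyhedral convex set), let g = θ∘λ be the associated spectral function, and let X ∈ Sⁿ with θ(λ(X)) finite. If Y belongs to the relative interior of the convex subdifferential ∂g(X), then g is generalized twice differentiable at X for Y. -/
open Filter Topology Matrix

noncomputable section

namespace SpecPaper

/-! ## Generic variational analysis definitions over a topological real vector space -/

variable {E : Type*}

section Generic

variable [AddCommGroup E] [Module ℝ E] [TopologicalSpace E]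

/-- `f x` is finite (neither `+∞` nor `-∞`). -/
def IsFiniteAt (f : E → EReal) (x : E) : Prop :=
  f x ≠ ⊤ ∧ f x ≠ ⊥

/-- The norm induced by a given inner product. -/
noncomputable def nrm (ip : E → E → ℝ) (x : E) : ℝ :=
  Real.sqrt (ip x x)

/-- The subderivative `df(x)(w)`. -/
noncomputable def subderiv (f : E → EReal) (x w : E) : EReal :=
  Filter.liminf (fun p : ℝ × E => (((p.1)⁻¹ : ℝ) : EReal) * (f (x + p.1 • p.2) - f x))
    ((nhdsWithin (0 : ℝ) (Set.Ioi 0)) ×ˢ nhds w)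

/-- The second-order difference quotient `Δ²ₜ f(x,v)(w)`. -/
noncomputable def sdq2 (ip : E → E → ℝ) (f : E → EReal) (x v : E) (t : ℝ) (w : E) : EReal :=
  (((2 / t ^ 2) : ℝ) : EReal) * (f (x + t • w) - f x - ((t * ip v w : ℝ) : EReal))

/-- The second subderivative `d²f(x,v)(w)`. -/
noncomputable def subderiv2 (ip : E → E → ℝ) (f : E → EReal) (x v w : E) : EReal :=
  Filter.liminf (fun p : ℝ × E => sdq2 ip f x v p.1 p.2)
    ((nhdsWithin (0 : ℝ) (Set.Ioi 0)) ×ˢ nhds w)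

/-- Twice epi-differentiability of `f` at `x` for `v`. -/
def TwiceEpiDiff (ip : E → E → ℝ) (f : E → EReal) (x v : E) : Prop :=
  IsFiniteAt f x ∧
    ∀ t : ℕ → ℝ, (∀ k, 0 < t k) → Tendsto t atTop (nhds 0) →
      ∀ w : E, ∃ ws : ℕ → E, Tendsto ws atTop (nhds w) ∧
        Tendsto (fun k => sdq2 ip f x v (t k) (ws k)) atTop (nhds (subderiv2 ip f x v w))

/-- `v` is a regular subgradient of `f` at `x`. -/
def RegSubgrad (ip : E → E → ℝ) (f : E → EReal) (x v : E) : Prop :=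
  IsFiniteAt f x ∧
    (0 : EReal) ≤ Filter.liminf
      (fun y : E =>
        (((nrm ip (y - x))⁻¹ : ℝ) : EReal) * (f y - f x - ((ip v (y - x) : ℝ) : EReal)))
      (nhdsWithin x {x}ᶜ)

/-- `v` is a (limiting) subgradient of `f` at `x`. -/
def LimSubgrad (ip : E → E → ℝ) (f : E → EReal) (x v : E) : Prop :=
  ∃ xs vs : ℕ → E, (∀ k, RegSubgrad ip f (xs k) (vs k)) ∧
    Tendsto xs atTop (nhds x) ∧ Tendsto vs atTop (nhds v) ∧
    Tendsto (fun k => f (xs k)) atTop (nhds (f x))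

/-- The tangent cone to `C` at `x`. -/
def tangentCone (C : Set E) (x : E) : Set E :=
  {w | ∃ (t : ℕ → ℝ) (ws : ℕ → E), (∀ k, 0 < t k) ∧ Tendsto t atTop (nhds 0) ∧
    Tendsto ws atTop (nhds w) ∧ ∀ k, x + t k • ws k ∈ C}

/-- The regular normal cone to `C` at `x`. -/
def regNormalCone (ip : E → E → ℝ) (C : Set E) (x : E) : Set E :=
  {v | ∀ w ∈ tangentCone C x, ip v w ≤ 0}

/-- The limiting normal cone to `C` at `x`. -/
def limNormalCone (ip : E → E → ℝ) (C : Set E) (x : E) : Set E :=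
  {v | ∃ xs vs : ℕ → E, (∀ k, xs k ∈ C) ∧ (∀ k, vs k ∈ regNormalCone ip C (xs k)) ∧
    Tendsto xs atTop (nhds x) ∧ Tendsto vs atTop (nhds v)}

/-- The critical cone `C_f(x,v)`. -/
def criticalCone (ip : E → E → ℝ) (f : E → EReal) (x v : E) : Set E :=
  {w | subderiv f x w = ((ip v w : ℝ) : EReal)}

/-- `f` is locally Lipschitz continuous at `x` relative to its domain. -/
def LocLipAtRelDom (ip : E → E → ℝ) (f : E → EReal) (x : E) : Prop :=
  IsFiniteAt f x ∧
    ∃ V ∈ nhds x, ∃ ℓ : ℝ, 0 ≤ ℓ ∧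
      ∀ a ∈ V, ∀ b ∈ V, f a ≠ ⊤ → f b ≠ ⊤ →
        f a ≠ ⊥ ∧ f b ≠ ⊥ ∧ |(f a).toReal - (f b).toReal| ≤ ℓ * nrm ip (a - b)

/-- `f` is locally Lipschitz continuous relative to its domain. -/
def LocLipRelDom (ip : E → E → ℝ) (f : E → EReal) : Prop :=
  ∀ x : E, f x ≠ ⊤ → LocLipAtRelDom ip f x

/-- `v` is a proximal subgradient of `f` at `x`. -/
def ProxSubgrad (ip : E → E → ℝ) (f : E → EReal) (x v : E) : Prop :=
  IsFiniteAt f x ∧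
    ∃ r > (0 : ℝ), ∃ ε > (0 : ℝ), ∀ x' : E, nrm ip (x' - x) ≤ ε →
      f x + ((ip v (x' - x) - r / 2 * ip (x' - x) (x' - x) : ℝ) : EReal) ≤ f x'

/-- `f` is prox-regular at `x` for `v`. -/
def ProxRegularAtFor (ip : E → E → ℝ) (f : E → EReal) (x v : E) : Prop :=
  IsFiniteAt f x ∧
    (∃ δ > (0 : ℝ), LowerSemicontinuousOn f {x' | nrm ip (x' - x) < δ}) ∧
    ∃ ε > (0 : ℝ), ∃ r : ℝ, 0 ≤ r ∧
      ∀ x₁ v₁ : E, LimSubgrad ip f x₁ v₁ → nrm ip (x₁ - x) < ε → nrm ip (v₁ - v) < ε →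
        f x₁ < f x + (ε : EReal) →
        ∀ x' : E, nrm ip (x' - x) < ε →
          f x₁ + ((ip v₁ (x' - x₁) - r / 2 * ip (x' - x₁) (x' - x₁) : ℝ) : EReal) ≤ f x'

/-- `f` is prox-regular at `x` (for every subgradient). -/
def ProxRegularAt (ip : E → E → ℝ) (f : E → EReal) (x : E) : Prop :=
  ∀ v : E, LimSubgrad ip f x v → ProxRegularAtFor ip f x v

/-- `f` is subdifferentially continuous at `x`. -/
def SubdiffContAt (ip : E → E → ℝ) (f : E → EReal) (x : E) : Prop :=
  ∀ v : E, LimSubgrad ip f x v →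
    ∀ xs vs : ℕ → E, (∀ k, LimSubgrad ip f (xs k) (vs k)) →
      Tendsto xs atTop (nhds x) → Tendsto vs atTop (nhds v) →
      Tendsto (fun k => f (xs k)) atTop (nhds (f x))

/-- `f` is prox-bounded. -/
def ProxBounded (ip : E → E → ℝ) (f : E → EReal) : Prop :=
  ∃ α c : ℝ, ∀ x : E, (c : EReal) ≤ f x + ((α * ip x x : ℝ) : EReal)

/-- The proximal mapping (as a set of minimizers). -/
def proxSet (ip : E → E → ℝ) (f : E → EReal) (γ : ℝ) (x : E) : Set E :=
  {w | ∀ w' : E,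
    f w + ((1 / (2 * γ) * ip (w - x) (w - x) : ℝ) : EReal) ≤
      f w' + ((1 / (2 * γ) * ip (w' - x) (w' - x) : ℝ) : EReal)}

/-- The proximal map of `f` with parameter `γ` is single-valued around `z` and the resulting
map is directionally differentiable at `z`. -/
def ProxSingleDirDiff (ip : E → E → ℝ) (f : E → EReal) (γ : ℝ) (z : E) : Prop :=
  ∃ V ∈ nhds z, ∃ P : E → E, (∀ u ∈ V, proxSet ip f γ u = {P u}) ∧
    ∀ h : E, ∃ L : E,
      Tendsto (fun t : ℝ => t⁻¹ • (P (z + t • h) - P z)) (nhdsWithin 0 (Set.Ioi 0)) (nhds L)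

/-- The parabolic difference quotient. -/
noncomputable def parabQuot (f : E → EReal) (x w : E) (t : ℝ) (z : E) : EReal :=
  (((2 / t ^ 2) : ℝ) : EReal) *
    (f (x + t • w + (t ^ 2 / 2) • z) - f x - ((t * (subderiv f x w).toReal : ℝ) : EReal))

/-- The parabolic subderivative `d²f(x)(w | z)`. -/
noncomputable def parabSubderiv (f : E → EReal) (x w z : E) : EReal :=
  Filter.liminf (fun p : ℝ × E => parabQuot f x w p.1 p.2)
    ((nhdsWithin (0 : ℝ) (Set.Ioi 0)) ×ˢ nhds z)

/-- `f` is parabolically epi-differentiable at `x` for `w`. -/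
def ParabEpiDiff (f : E → EReal) (x w : E) : Prop :=
  (∃ z : E, parabSubderiv f x w z < ⊤) ∧
    ∀ t : ℕ → ℝ, (∀ k, 0 < t k) → Tendsto t atTop (nhds 0) →
      ∀ z : E, ∃ zs : ℕ → E, Tendsto zs atTop (nhds z) ∧
        Tendsto (fun k => parabQuot f x w (t k) (zs k)) atTop (nhds (parabSubderiv f x w z))

/-- `φ` is a generalized quadratic form: its domain is a linear subspace and on the domain it is
given by a symmetric linear operator. -/
def IsGQF (ip : E → E → ℝ) (φ : E → EReal) : Prop :=
  (φ 0 ≠ ⊤) ∧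
  (∀ x y : E, φ x ≠ ⊤ → φ y ≠ ⊤ → φ (x + y) ≠ ⊤) ∧
  (∀ (c : ℝ) (x : E), φ x ≠ ⊤ → φ (c • x) ≠ ⊤) ∧
  ∃ L : E → E,
    (∀ x y : E, φ x ≠ ⊤ → φ y ≠ ⊤ → L (x + y) = L x + L y) ∧
    (∀ (c : ℝ) (x : E), φ x ≠ ⊤ → L (c • x) = c • L x) ∧
    (∀ x y : E, φ x ≠ ⊤ → φ y ≠ ⊤ → ip (L x) y = ip x (L y)) ∧
    (∀ x : E, φ x ≠ ⊤ → φ x = ((ip (L x) x : ℝ) : EReal))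

/-- `f` is generalized twice differentiable at `x` for `v`. -/
def GenTwiceDiff (ip : E → E → ℝ) (f : E → EReal) (x v : E) : Prop :=
  TwiceEpiDiff ip f x v ∧ IsGQF ip (subderiv2 ip f x v)

/-- Proto-differentiability of a set-valued map `F` at `x` for `y ∈ F x`. -/
def ProtoDiff (F : E → Set E) (x y : E) : Prop :=
  ∀ w η : E, (w, η) ∈ tangentCone {p : E × E | p.2 ∈ F p.1} (x, y) →
    ∀ t : ℕ → ℝ, (∀ k, 0 < t k) → Tendsto t atTop (nhds 0) →
      ∃ ws ηs : ℕ → E, Tendsto ws atTop (nhds w) ∧ Tendsto ηs atTop (nhds η) ∧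
        ∀ k, y + t k • ηs k ∈ F (x + t k • ws k)

/-- Relative interior of a set (interior relative to its affine hull). -/
def relInterior (C : Set E) : Set E :=
  {y | y ∈ C ∧ ∃ V ∈ nhds y, ∀ z ∈ V, z ∈ affineSpan ℝ C → z ∈ C}

/-- A polyhedral set: the intersection of finitely many closed half-spaces. -/
def IsPolyhedral (ip : E → E → ℝ) (C : Set E) : Prop :=
  ∃ (k : ℕ) (a : Fin k → E) (b : Fin k → ℝ), C = {x | ∀ j : Fin k, ip (a j) x ≤ b j}

/-- The subdifferential of a convex function. -/
def convexSubdiff (ip : E → E → ℝ) (f : E → EReal) (x : E) : Set E :=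
  {v | ∀ z : E, f x + ((ip v (z - x) : ℝ) : EReal) ≤ f z}

/-- The natural inner product on `E × ℝ`. -/
def ipProd (ip : E → E → ℝ) : E × ℝ → E × ℝ → ℝ :=
  fun p q => ip p.1 q.1 + p.2 * q.2

/-- The epigraph of `f`. -/
def epiSet (f : E → EReal) : Set (E × ℝ) :=
  {p | f p.1 ≤ (p.2 : EReal)}

/-- `f` is subdifferentially regular at `x`. -/
def SubdiffRegularAt (ip : E → E → ℝ) (f : E → EReal) (x : E) : Prop :=
  IsFiniteAt f x ∧
    regNormalCone (ipProd ip) (epiSet f) (x, (f x).toReal) =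
      limNormalCone (ipProd ip) (epiSet f) (x, (f x).toReal)

/-! Real-valued versions: semidifferentiability, gradients. -/

/-- `f` is semidifferentiable at `x`. -/
def SemiDiffAt (f : E → ℝ) (x : E) : Prop :=
  ∀ w : E, ∃ d : ℝ,
    Tendsto (fun p : ℝ × E => (p.1)⁻¹ * (f (x + p.1 • p.2) - f x))
      ((nhdsWithin (0 : ℝ) (Set.Ioi 0)) ×ˢ nhds w) (nhds d)

/-- The (real value of the) subderivative of a real-valued function. -/
noncomputable def dReal (f : E → ℝ) (x w : E) : ℝ :=
  (subderiv (fun y => ((f y : ℝ) : EReal)) x w).toReal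

/-- The second-order difference quotient built from the subderivative. -/
noncomputable def sdq2R (f : E → ℝ) (x : E) (t : ℝ) (w : E) : ℝ :=
  (2 / t ^ 2) * (f (x + t • w) - f x - t * dReal f x w)

/-- `f` is twice semidifferentiable at `x`. -/
def TwiceSemiDiffAt (f : E → ℝ) (x : E) : Prop :=
  SemiDiffAt f x ∧
    ∀ w : E, ∃ d : ℝ,
      Tendsto (fun p : ℝ × E => sdq2R f x p.1 p.2)
        ((nhdsWithin (0 : ℝ) (Set.Ioi 0)) ×ˢ nhds w) (nhds d)

/-- The second semiderivative `d²f(x)(w)` (the liminf; it is the full limit whenever `f` is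
twice semidifferentiable at `x`). -/
noncomputable def secondSemiDeriv (f : E → ℝ) (x w : E) : EReal :=
  Filter.liminf (fun p : ℝ × E => ((sdq2R f x p.1 p.2 : ℝ) : EReal))
    ((nhdsWithin (0 : ℝ) (Set.Ioi 0)) ×ˢ nhds w)

/-- `f` is (Fréchet) differentiable at `x` with gradient `g` (w.r.t. inner product `ip`). -/
def HasGradAt (ip : E → E → ℝ) (f : E → ℝ) (x g : E) : Prop :=
  Tendsto (fun y : E => (nrm ip (y - x))⁻¹ * (f y - f x - ip g (y - x)))
    (nhdsWithin x {x}ᶜ) (nhds 0)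

/-- `f` is locally Lipschitz continuous around `x`. -/
def LocLipAt (ip : E → E → ℝ) (f : E → ℝ) (x : E) : Prop :=
  ∃ V ∈ nhds x, ∃ ℓ : ℝ, 0 ≤ ℓ ∧ ∀ a ∈ V, ∀ b ∈ V, |f a - f b| ≤ ℓ * nrm ip (a - b)

/-- `f` is twice differentiable at `x` with gradient map `G` near `x` and second derivative
(the derivative of `G` at `x`) given by the linear map `Dxx`. -/
def HasSecondDerivAt (ip : E → E → ℝ) (f : E → EReal) (x : E) (G : E → E) (Dxx : E → E) :
    Prop :=
  ∃ V ∈ nhds x, ∃ fr : E → ℝ,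
    (∀ z ∈ V, f z = ((fr z : ℝ) : EReal)) ∧
    (∀ z ∈ V, HasGradAt ip fr z (G z)) ∧
    IsLinearMap ℝ Dxx ∧
    Tendsto (fun z : E => (nrm ip (z - x))⁻¹ • (G z - G x - Dxx (z - x)))
      (nhdsWithin x {x}ᶜ) (nhds 0)

/-- `f` is twice differentiable at `x`. -/
def TwiceDiffAt (ip : E → E → ℝ) (f : E → EReal) (x : E) : Prop :=
  ∃ G Dxx : E → E, HasSecondDerivAt ip f x G Dxx

end Generic

/-! ## Eigenvalues and spectral machinery -/

open scoped Classical in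
/-- The eigenvalues of a real symmetric matrix, arranged in nonincreasing order
(junk value `0` if the matrix is not symmetric). -/
noncomputable def eigval {n : ℕ} (X : Matrix (Fin n) (Fin n) ℝ) : Fin n → ℝ :=
  if h : X.IsHermitian then
    fun i => h.eigenvalues (Tuple.sort (fun j => -h.eigenvalues j) i)
  else 0

/-- `Oⁿ(X)`: orthogonal matrices realizing the ordered spectral decomposition of `X`. -/
def eigOrth {n : ℕ} (X : Matrix (Fin n) (Fin n) ℝ) : Set (Matrix (Fin n) (Fin n) ℝ) :=
  {U | U * Uᵀ = 1 ∧ X = U * Matrix.diagonal (eigval X) * Uᵀ}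

open scoped Classical in
/-- The block `α_m` of indices `j` whose eigenvalue `λ_j(X)` equals `λ_i(X)`. -/
noncomputable def blockSet {n : ℕ} (X : Matrix (Fin n) (Fin n) ℝ) (i : Fin n) :
    Finset (Fin n) :=
  Finset.univ.filter fun j => eigval X j = eigval X i

lemma mem_blockSet_self {n : ℕ} (X : Matrix (Fin n) (Fin n) ℝ) (i : Fin n) :
    i ∈ blockSet X i := by
  simp [blockSet]

/-- The increasing enumeration of the block of `i`. -/
noncomputable def blockEmb {n : ℕ} (X : Matrix (Fin n) (Fin n) ℝ) (i : Fin n) :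
    Fin (blockSet X i).card → Fin n :=
  fun a => ((blockSet X i).orderIsoOfFin rfl a : Fin n)

/-- The position of `i` inside its own block. -/
noncomputable def blockIdx {n : ℕ} (X : Matrix (Fin n) (Fin n) ℝ) (i : Fin n) :
    Fin (blockSet X i).card :=
  ((blockSet X i).orderIsoOfFin rfl).symm ⟨i, mem_blockSet_self X i⟩

/-- The principal submatrix of `M` corresponding to the block of `i` (for `X`). -/
noncomputable def blockMat {n : ℕ} (X M : Matrix (Fin n) (Fin n) ℝ) (i : Fin n) :
    Matrix (Fin (blockSet X i).card) (Fin (blockSet X i).card) ℝ :=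
  Matrix.of fun a b => M (blockEmb X i a) (blockEmb X i b)

/-- The directional derivative `λ'(X;H)` of the ordered eigenvalue map, computed through
`U ∈ Oⁿ(X)`: blockwise ordered eigenvalues of `U_{α_m}ᵀ H U_{α_m}`. -/
noncomputable def lambdaDir {n : ℕ} (X U H : Matrix (Fin n) (Fin n) ℝ) : Fin n → ℝ :=
  fun i => eigval (blockMat X (Uᵀ * H * U) i) (blockIdx X i)

open scoped Classical in
/-- The Moore–Penrose pseudoinverse of a square real matrix, characterized by the four
Penrose equations. -/
noncomputable def pinv {n : ℕ} (A : Matrix (Fin n) (Fin n) ℝ) :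
    Matrix (Fin n) (Fin n) ℝ :=
  if h : ∃ B : Matrix (Fin n) (Fin n) ℝ,
      A * B * A = A ∧ B * A * B = B ∧ (A * B)ᵀ = A * B ∧ (B * A)ᵀ = B * A
  then h.choose else 0

/-- The curvature term `2 ∑ₘ ⟨Diag(y)_{αₘαₘ}, U_{αₘ}ᵀ H (μₘ I - X)† H U_{αₘ}⟩`, written as a
single sum over all indices. -/
noncomputable def curvTerm {n : ℕ} (X U H : Matrix (Fin n) (Fin n) ℝ) (y : Fin n → ℝ) : ℝ :=
  2 * ∑ i : Fin n, y i *
    (Uᵀ * (H * pinv (eigval X i • (1 : Matrix (Fin n) (Fin n) ℝ) - X) * H) * U) i i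

/-- Two symmetric matrices admit a simultaneous ordered spectral decomposition. -/
def simOrdSpec {k : ℕ} (A B : Matrix (Fin k) (Fin k) ℝ) : Prop :=
  ∃ P : Matrix (Fin k) (Fin k) ℝ, P * Pᵀ = 1 ∧
    A = P * Matrix.diagonal (eigval A) * Pᵀ ∧
    B = P * Matrix.diagonal (eigval B) * Pᵀ

/-- The subspace of symmetric `n × n` real matrices. -/
def symSubmodule (n : ℕ) : Submodule ℝ (Matrix (Fin n) (Fin n) ℝ) where
  carrier := {A | A.IsSymm}
  add_mem' := by
    intro a b ha hb
    simp only [Set.mem_setOf_eq, Matrix.IsSymm] at *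
    rw [Matrix.transpose_add, ha, hb]
  zero_mem' := by
    simp only [Set.mem_setOf_eq, Matrix.IsSymm, Matrix.transpose_zero]
  smul_mem' := by
    intro c a ha
    simp only [Set.mem_setOf_eq, Matrix.IsSymm] at *
    rw [Matrix.transpose_smul, ha]

/-- The space `Sⁿ` of symmetric `n × n` real matrices. -/
abbrev Sym (n : ℕ) : Type := ↥(symSubmodule n)

/-- The trace inner product `⟨A, B⟩ = tr(AB)` on `Sⁿ`. -/
noncomputable def ipM {n : ℕ} (A B : Sym n) : ℝ :=
  ((A : Matrix (Fin n) (Fin n) ℝ) * (B : Matrix (Fin n) (Fin n) ℝ)).trace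

/-- The Euclidean inner product on `ℝⁿ`. -/
def ipV {n : ℕ} (v w : Fin n → ℝ) : ℝ :=
  ∑ i, v i * w i

/-- The spectral function `g = θ ∘ λ` on `Sⁿ`. -/
noncomputable def specFn {n : ℕ} (θ : (Fin n → ℝ) → EReal) : Sym n → EReal :=
  fun A => θ (eigval (A : Matrix (Fin n) (Fin n) ℝ))

/-- A function on `ℝⁿ` is symmetric (permutation invariant). -/
def SymmetricFn {n : ℕ} {α : Type*} (θ : (Fin n → ℝ) → α) : Prop :=
  ∀ (x : Fin n → ℝ) (σ : Equiv.Perm (Fin n)), θ (fun i => x (σ i)) = θ x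

/-- The diagonal matrix `Diag(w)` as an element of `Sⁿ`. -/
noncomputable def diagSym {n : ℕ} (w : Fin n → ℝ) : Sym n :=
  ⟨Matrix.diagonal w, Matrix.isSymm_diagonal w⟩

/-- The `i`-th order statistic: `orderStat x i` is the `i`-th largest entry of `x`. -/
noncomputable def orderStat {n : ℕ} (x : Fin n → ℝ) : Fin n → ℝ :=
  fun i => x (Tuple.sort (fun j => -x j) i)



/-! ## Spectral lemmas -/

/-- Spectral theorem for real symmetric matrices, over any finite index type. -/
lemma exists_diag {ι : Type*} [Fintype ι] [DecidableEq ι] (A : Matrix ι ι ℝ) (hA : Aᵀ = A) :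
    ∃ (Q : Matrix ι ι ℝ) (d : ι → ℝ), Q * Qᵀ = 1 ∧ A = Q * Matrix.diagonal d * Qᵀ := by
  have h : A.IsHermitian := by
    rw [Matrix.IsHermitian, Matrix.conjTranspose_eq_transpose_of_trivial, hA]
  refine ⟨h.eigenvectorUnitary, h.eigenvalues, ?_, ?_⟩
  · have := Unitary.coe_mul_star_self h.eigenvectorUnitary
    rwa [Unitary.coe_star, Matrix.star_eq_conjTranspose, Matrix.conjTranspose_eq_transpose_of_trivial] at this
  · have := h.spectral_theorem
    rw [Unitary.conjStarAlgAut_apply, Matrix.star_eq_conjTranspose,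
      Matrix.conjTranspose_eq_transpose_of_trivial] at this
    exact this

/-- Multisets of values determine a tuple up to a permutation. -/
lemma exists_perm_of_map_eq {ι : Type*} [Fintype ι] [DecidableEq ι] (a b : ι → ℝ)
    (h : (Finset.univ : Finset ι).val.map a = (Finset.univ : Finset ι).val.map b) :
    ∃ σ : Equiv.Perm ι, a = fun i => b (σ i) := by
  classical
  have hc : ∀ c : ℝ, Fintype.card {i // a i = c} = Fintype.card {i // b i = c} := by
    intro c
    have h1 := congrArg (Multiset.count c) h
    rw [Multiset.count_map, Multiset.count_map] at h1
    rw [Fintype.card_subtype, Fintype.card_subtype]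
    simp only [Finset.card_def, Finset.filter_val]
    simpa [eq_comm] using h1
  have e : ∀ c : ℝ, {i // a i = c} ≃ {i // b i = c} := fun c => Fintype.equivOfCardEq (hc c)
  refine ⟨((Equiv.sigmaFiberEquiv a).symm.trans (Equiv.sigmaCongrRight e)).trans
    (Equiv.sigmaFiberEquiv b), ?_⟩
  funext i
  exact ((e (a i)) ⟨i, rfl⟩).2.symm

/-- The spectral function at a diagonalized matrix. -/
lemma specFn_diag {n : ℕ} {θ : (Fin n → ℝ) → EReal} (hsym : SymmetricFn θ)
    (Z : Sym n) (Q : Matrix (Fin n) (Fin n) ℝ) (z : Fin n → ℝ) (hQ : Q * Qᵀ = 1)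
    (hZ : Z.val = Q * Matrix.diagonal z * Qᵀ) : specFn θ Z = θ z := by
  have hQ' : Qᵀ * Q = 1 := mul_eq_one_comm.mp hQ
  have h : (Z.val).IsHermitian := by
    rw [Matrix.IsHermitian, Matrix.conjTranspose_eq_transpose_of_trivial]
    exact Z.2
  have hroots := h.roots_charpoly_eq_eigenvalues
  have hch : (Z.val).charpoly = (Matrix.diagonal z).charpoly := by
    have := Matrix.charpoly_units_conj ⟨Q, Qᵀ, hQ, hQ'⟩ (Matrix.diagonal z)
    rw [hZ]
    simpa [Matrix.inv_eq_right_inv hQ] using this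
  rw [hch, Matrix.charpoly_diagonal, Polynomial.roots_prod _ _ (by
    rw [Finset.prod_ne_zero_iff]; intro i _; exact Polynomial.X_sub_C_ne_zero _)] at hroots
  simp only [Polynomial.roots_X_sub_C, Multiset.bind_singleton] at hroots
  obtain ⟨σ, hσ⟩ := exists_perm_of_map_eq h.eigenvalues z (by simpa using hroots.symm)
  have hev : eigval Z.val = fun i => h.eigenvalues (Tuple.sort (fun j => -h.eigenvalues j) i) := by
    unfold eigval
    rw [dif_pos h]
  rw [specFn, hev, hsym, hσ, hsym]

/-- Simultaneous diagonalization of commuting symmetric matrices. -/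
lemma exists_simul_diag {n : ℕ} (X B : Matrix (Fin n) (Fin n) ℝ) (hX : Xᵀ = X) (hB : Bᵀ = B)
    (hXB : B * X = X * B) :
    ∃ (Q : Matrix (Fin n) (Fin n) ℝ) (x w : Fin n → ℝ), Q * Qᵀ = 1 ∧
      X = Q * Matrix.diagonal x * Qᵀ ∧ B = Q * Matrix.diagonal w * Qᵀ := by
  classical
  obtain ⟨U, x, hU, hXU⟩ := exists_diag X hX
  have hU' : Uᵀ * U = 1 := mul_eq_one_comm.mp hU
  set A := Uᵀ * B * U with hAdef
  have hBA : B = U * A * Uᵀ := by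
    have : U * A * Uᵀ = (U * Uᵀ) * B * (U * Uᵀ) := by rw [hAdef]; noncomm_ring
    rw [this, hU]; simp
  have hAT : Aᵀ = A := by
    rw [hAdef]; simp [hB, Matrix.mul_assoc]
  have hcomm : A * diagonal x = diagonal x * A := by
    have e1 : Uᵀ * (B * X) * U = A * diagonal x := by
      have : Uᵀ * (B * X) * U = A * diagonal x * (Uᵀ * U) := by
        rw [hXU, hAdef]; noncomm_ring
      rw [this, hU', mul_one]
    have e2 : Uᵀ * (X * B) * U = diagonal x * A := by
      have : Uᵀ * (X * B) * U = (Uᵀ * U) * diagonal x * A := by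
        rw [hXU, hAdef]; noncomm_ring
      rw [this, hU', one_mul]
    rw [← e1, ← e2, hXB]
  have hA0 : ∀ i j, x i ≠ x j → A i j = 0 := by
    intro i j hij
    have := congrFun (congrFun hcomm i) j
    rw [Matrix.mul_diagonal, Matrix.diagonal_mul] at this
    have h2 : (x i - x j) * A i j = 0 := by linarith
    rcases mul_eq_zero.mp h2 with h3 | h3
    · exact absurd (sub_eq_zero.mp h3) hij
    · exact h3
  let f : Fin n → Set.range x := fun i => ⟨x i, i, rfl⟩
  let e : (Σ c : Set.range x, {i // f i = c}) ≃ Fin n := Equiv.sigmaFiberEquiv f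
  have hblk : ∀ c : Set.range x, ∃ (Q : Matrix {i // f i = c} {i // f i = c} ℝ)
      (d : {i // f i = c} → ℝ), Q * Qᵀ = 1 ∧
        A.submatrix Subtype.val Subtype.val = Q * Matrix.diagonal d * Qᵀ := by
    intro c
    apply exists_diag
    rw [Matrix.transpose_submatrix, hAT]
  choose q d hq hqd using hblk
  have hAe : A.submatrix e e =
      blockDiagonal' q * diagonal (fun s => d s.1 s.2) * (blockDiagonal' q)ᵀ := by
    rw [← Matrix.blockDiagonal'_diagonal, Matrix.blockDiagonal'_transpose,
      ← Matrix.blockDiagonal'_mul, ← Matrix.blockDiagonal'_mul]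
    simp only [← hqd]
    ext ⟨c, i, hi⟩ ⟨c', j, hj⟩
    by_cases hcc : c = c'
    · subst hcc
      rw [Matrix.blockDiagonal'_apply_eq]; rfl
    · rw [Matrix.blockDiagonal'_apply_ne _ _ _ hcc]
      apply hA0
      intro hh
      apply hcc
      rw [← hi, ← hj]
      exact Subtype.ext hh
  have hxe : (diagonal x).submatrix e e =
      blockDiagonal' q * diagonal (x ∘ e) * (blockDiagonal' q)ᵀ := by
    have h1 : (x ∘ e) = fun s : (Σ c : Set.range x, {i // f i = c}) => (s.1 : ℝ) := by
      funext ⟨c, i, hi⟩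
      exact congrArg Subtype.val hi
    rw [Matrix.submatrix_diagonal_equiv, h1,
      ← Matrix.blockDiagonal'_diagonal (fun (c : Set.range x) (_ : {i // f i = c}) => (c : ℝ)),
      Matrix.blockDiagonal'_transpose,
      ← Matrix.blockDiagonal'_mul, ← Matrix.blockDiagonal'_mul]
    congr 1
    funext c
    have : (diagonal fun _ : {i // f i = c} => (c : ℝ)) = (c : ℝ) • 1 := by
      rw [Matrix.smul_one_eq_diagonal]
    rw [this]; simp [hq]
  have hqq : blockDiagonal' q * (blockDiagonal' q)ᵀ = 1 := by
    rw [Matrix.blockDiagonal'_transpose, ← Matrix.blockDiagonal'_mul]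
    simp only [hq]
    exact Matrix.blockDiagonal'_one
  set P := (blockDiagonal' q).submatrix e.symm e.symm with hP
  have hPP : P * Pᵀ = 1 := by
    rw [hP, Matrix.transpose_submatrix, Matrix.submatrix_mul_equiv, hqq,
      Matrix.submatrix_one_equiv]
  have key : ∀ (M : Matrix (Fin n) (Fin n) ℝ) (v : (Σ c : Set.range x, {i // f i = c}) → ℝ),
      M.submatrix e e = blockDiagonal' q * diagonal v * (blockDiagonal' q)ᵀ →
      M = P * diagonal (v ∘ e.symm) * Pᵀ := by
    intro M v h
    have h2 := congrArg (fun K => K.submatrix e.symm e.symm) h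
    simp only [Matrix.submatrix_submatrix, Equiv.self_comp_symm, Matrix.submatrix_id_id] at h2
    rw [h2, hP, Matrix.transpose_submatrix, ← Matrix.submatrix_diagonal_equiv,
      Matrix.submatrix_mul_equiv, Matrix.submatrix_mul_equiv]
  refine ⟨U * P, (x ∘ e) ∘ e.symm, (fun s => d s.1 s.2) ∘ e.symm, ?_, ?_, ?_⟩
  · rw [Matrix.transpose_mul]
    calc U * P * (Pᵀ * Uᵀ) = U * (P * Pᵀ) * Uᵀ := by noncomm_ring
      _ = 1 := by rw [hPP]; simp [hU]
  · conv_lhs => rw [hXU, key _ _ hxe]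
    rw [Matrix.transpose_mul]; noncomm_ring
  · conv_lhs => rw [hBA, key _ _ hAe]
    rw [Matrix.transpose_mul]; noncomm_ring

/-- The spectral function is invariant under orthogonal conjugation. -/
lemma specFn_conj {n : ℕ} {θ : (Fin n → ℝ) → EReal} (hsym : SymmetricFn θ)
    (Z Z' : Sym n) (R : Matrix (Fin n) (Fin n) ℝ) (hR : R * Rᵀ = 1)
    (hZ : Z'.val = R * Z.val * Rᵀ) : specFn θ Z' = specFn θ Z := by
  obtain ⟨Q, d, hQ, hd⟩ := exists_diag Z.val Z.2
  rw [specFn_diag hsym Z Q d hQ hd, specFn_diag hsym Z' (R * Q) d]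
  · rw [Matrix.transpose_mul]
    calc R * Q * (Qᵀ * Rᵀ) = R * (Q * Qᵀ) * Rᵀ := by noncomm_ring
      _ = 1 := by rw [hQ]; simp [hR]
  · rw [hZ, hd, Matrix.transpose_mul]; noncomm_ring

/-! ## Convexity and polyhedrality -/

lemma ipV_add_right {n : ℕ} (a z w : Fin n → ℝ) : ipV a (z + w) = ipV a z + ipV a w := by
  simp [ipV, mul_add, Finset.sum_add_distrib]

lemma ipV_sub_right {n : ℕ} (a z w : Fin n → ℝ) : ipV a (z - w) = ipV a z - ipV a w := by
  simp [ipV, mul_sub, Finset.sum_sub_distrib]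

lemma ipV_smul_right {n : ℕ} (c : ℝ) (a z : Fin n → ℝ) : ipV a (c • z) = c * ipV a z := by
  simp only [ipV, Finset.mul_sum, Pi.smul_apply, smul_eq_mul]
  exact Finset.sum_congr rfl fun i _ => by ring

lemma ipV_add_left {n : ℕ} (a z w : Fin n → ℝ) : ipV (a + z) w = ipV a w + ipV z w := by
  simp [ipV, add_mul, Finset.sum_add_distrib]

lemma ipV_smul_left {n : ℕ} (c : ℝ) (a z : Fin n → ℝ) : ipV (c • a) z = c * ipV a z := by
  simp only [ipV, Finset.mul_sum, Pi.smul_apply, smul_eq_mul]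
  exact Finset.sum_congr rfl fun i _ => by ring

/-- A symmetric polyhedral function decreases under doubly stochastic averaging. -/
lemma theta_doublyStochastic {n : ℕ} {θ : (Fin n → ℝ) → EReal} (hsym : SymmetricFn θ)
    (hbot : ∀ x, θ x ≠ ⊥) (hpoly : IsPolyhedral (ipProd ipV) (epiSet θ))
    (D : Matrix (Fin n) (Fin n) ℝ) (hD : D ∈ doublyStochastic ℝ (Fin n)) (z : Fin n → ℝ) :
    θ (D *ᵥ z) ≤ θ z := by
  by_cases htop : θ z = ⊤
  · rw [htop]; exact le_top
  obtain ⟨r, hr⟩ : ∃ r : ℝ, θ z = (r : EReal) := ⟨_, (EReal.coe_toReal htop (hbot z)).symm⟩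
  obtain ⟨k, a, b, hepi⟩ := hpoly
  obtain ⟨w, hw0, hw1, hwD⟩ := exists_eq_sum_perm_of_mem_doublyStochastic hD
  have hz : ∀ (σ : Equiv.Perm (Fin n)) (j : Fin k),
      ipV (a j).1 (fun i => z (σ i)) + (a j).2 * r ≤ b j := by
    intro σ j
    have hm : ((fun i => z (σ i)), r) ∈ epiSet θ := by
      change θ (fun i => z (σ i)) ≤ (r : EReal)
      rw [hsym, hr]
    rw [hepi] at hm
    exact hm j
  have hDz : D *ᵥ z = ∑ σ, w σ • (fun i => z (σ i)) := by
    rw [← hwD, Matrix.sum_mulVec]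
    refine Finset.sum_congr rfl fun σ _ => ?_
    rw [Matrix.smul_mulVec, Matrix.permMatrix_mulVec]
    rfl
  have hlin : ∀ c : Fin n → ℝ, ipV c (D *ᵥ z) = ∑ σ, w σ * ipV c (fun i => z (σ i)) := by
    intro c
    rw [hDz]
    simp only [ipV, Finset.sum_apply, Pi.smul_apply, smul_eq_mul, Finset.mul_sum]
    rw [Finset.sum_comm]
    exact Finset.sum_congr rfl fun i _ => Finset.sum_congr rfl fun j _ => by ring
  have hmem : (D *ᵥ z, r) ∈ epiSet θ := by
    rw [hepi]
    intro j
    change ipV (a j).1 (D *ᵥ z) + (a j).2 * r ≤ b j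
    have e : ipV (a j).1 (D *ᵥ z) + (a j).2 * r
        = ∑ σ, w σ * (ipV (a j).1 (fun i => z (σ i)) + (a j).2 * r) := by
      rw [hlin]
      simp only [mul_add, Finset.sum_add_distrib]
      rw [← Finset.sum_mul, hw1, one_mul]
    have e2 : b j = ∑ σ, w σ * b j := by rw [← Finset.sum_mul, hw1, one_mul]
    rw [e, e2]
    exact Finset.sum_le_sum fun σ _ => mul_le_mul_of_nonneg_left (hz σ j) (hw0 σ)
  rw [hr]
  exact hmem

/-- The entrywise square of an orthogonal matrix is doubly stochastic. -/
lemma sq_mem_doublyStochastic {n : ℕ} (P : Matrix (Fin n) (Fin n) ℝ) (hP : P * Pᵀ = 1) :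
    (Matrix.of fun i j => P i j ^ 2) ∈ doublyStochastic ℝ (Fin n) := by
  have hP' : Pᵀ * P = 1 := mul_eq_one_comm.mp hP
  rw [mem_doublyStochastic_iff_sum]
  refine ⟨fun i j => sq_nonneg _, fun i => ?_, fun j => ?_⟩
  · have := congrFun (congrFun hP i) i
    simpa [Matrix.mul_apply, sq] using this
  · have := congrFun (congrFun hP' j) j
    simpa [Matrix.mul_apply, sq] using this

lemma trace_diag_conj {n : ℕ} (P : Matrix (Fin n) (Fin n) ℝ) (a z : Fin n → ℝ) :
    (diagonal a * (P * diagonal z * Pᵀ)).trace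
      = ipV a ((Matrix.of fun i j => P i j ^ 2) *ᵥ z) := by
  simp only [Matrix.trace, Matrix.diag, ipV, Matrix.diagonal_mul, Matrix.mul_apply (N := Pᵀ),
    Matrix.mul_diagonal, Matrix.transpose_apply, Matrix.mulVec, dotProduct, Matrix.of_apply]
  refine Finset.sum_congr rfl fun i _ => ?_
  congr 1
  exact Finset.sum_congr rfl fun j _ => by ring

lemma ipM_sub_right {n : ℕ} (A Z W : Sym n) : ipM A (Z - W) = ipM A Z - ipM A W := by
  simp [ipM, Matrix.mul_sub]

/-- Subgradients of `θ` lift to subgradients of the spectral function. -/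
lemma subdiff_lift {n : ℕ} {θ : (Fin n → ℝ) → EReal} (hsym : SymmetricFn θ)
    (hbot : ∀ x, θ x ≠ ⊥) (hpoly : IsPolyhedral (ipProd ipV) (epiSet θ))
    (X A : Sym n) (Q : Matrix (Fin n) (Fin n) ℝ) (x a : Fin n → ℝ) (hQ : Q * Qᵀ = 1)
    (hX : X.val = Q * diagonal x * Qᵀ) (hA : A.val = Q * diagonal a * Qᵀ)
    (ha : a ∈ convexSubdiff ipV θ x) :
    A ∈ convexSubdiff ipM (specFn θ) X := by
  intro Z
  have hQ' : Qᵀ * Q = 1 := mul_eq_one_comm.mp hQ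
  obtain ⟨V, z, hV, hZ⟩ := exists_diag Z.val Z.2
  rw [specFn_diag hsym Z V z hV hZ, specFn_diag hsym X Q x hQ hX]
  have hPP : (Qᵀ * V) * (Qᵀ * V)ᵀ = 1 := by
    rw [Matrix.transpose_mul, Matrix.transpose_transpose]
    calc Qᵀ * V * (Vᵀ * Q) = Qᵀ * (V * Vᵀ) * Q := by noncomm_ring
      _ = 1 := by rw [hV]; simp [hQ']
  have key : ∀ (M : Matrix (Fin n) (Fin n) ℝ) (m : Fin n → ℝ),
      (A.val * (M * diagonal m * Mᵀ)).trace
        = ipV a ((Matrix.of fun i j => (Qᵀ * M) i j ^ 2) *ᵥ m) := by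
    intro M m
    rw [← trace_diag_conj, hA, Matrix.mul_assoc, Matrix.mul_assoc, Matrix.trace_mul_comm,
      Matrix.transpose_mul, Matrix.transpose_transpose]
    congr 1
    noncomm_ring
  have e1 : ipM A Z = ipV a ((Matrix.of fun i j => (Qᵀ * V) i j ^ 2) *ᵥ z) := by
    rw [ipM, hZ, key]
  have e2 : ipM A X = ipV a x := by
    rw [ipM, hX, key, hQ']
    congr 1
    funext i
    simp [Matrix.mulVec, dotProduct, Matrix.one_apply]
  rw [ipM_sub_right, e1, e2, ← ipV_sub_right]
  exact (ha _).trans (theta_doublyStochastic hsym hbot hpoly _ (sq_mem_doublyStochastic _ hPP) z)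

/-- Directional behaviour of a polyhedral function along a direction on which all subgradients
agree. -/
lemma poly_dir {n : ℕ} {θ : (Fin n → ℝ) → EReal}
    (hpoly : IsPolyhedral (ipProd ipV) (epiSet θ)) (hbot : ∀ x, θ x ≠ ⊥)
    (x w : Fin n → ℝ) (r κ : ℝ) (hr : θ x = (r : EReal))
    (hne : (convexSubdiff ipV θ x).Nonempty)
    (hsub : ∀ a ∈ convexSubdiff ipV θ x, ipV a w = κ) :
    ∀ᶠ t : ℝ in 𝓝[>] 0, θ (x + t • w) ≤ ((r + t * κ : ℝ) : EReal) := by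
  obtain ⟨k, a, b, hepi⟩ := hpoly
  have hmem : ∀ (z : Fin n → ℝ) (s : ℝ),
      θ z ≤ (s : EReal) ↔ ∀ j, ipV (a j).1 z + (a j).2 * s ≤ b j := by
    intro z s
    have : (z, s) ∈ epiSet θ ↔ ∀ j, ipV (a j).1 z + (a j).2 * s ≤ b j := by
      rw [hepi]; rfl
    exact this
  -- subgradients need only be tested at finite values
  have hfinite : ∀ c : Fin n → ℝ,
      (∀ (z : Fin n → ℝ) (s : ℝ), θ z = (s : EReal) → r + ipV c (z - x) ≤ s) →
      c ∈ convexSubdiff ipV θ x := by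
    intro c hc z
    by_cases htop : θ z = ⊤
    · rw [htop]; exact le_top
    have hs : θ z = ((θ z).toReal : EReal) := (EReal.coe_toReal htop (hbot z)).symm
    rw [hr, hs, ← EReal.coe_add, EReal.coe_le_coe_iff]
    exact hc z _ hs
  have hx := (hmem x r).1 hr.le
  simp only [hmem]
  rw [eventually_all]
  intro j
  have hγ : (a j).2 ≤ 0 := by
    by_contra hpos
    push Not at hpos
    have h1 := (hmem x (r + (b j - (ipV (a j).1 x + (a j).2 * r) + 1) / (a j).2)).1 (by
      rw [hr, EReal.coe_le_coe_iff]
      have : 0 ≤ (b j - (ipV (a j).1 x + (a j).2 * r) + 1) / (a j).2 := by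
        apply div_nonneg _ hpos.le
        linarith [hx j]
      linarith) j
    rw [mul_add, mul_div_cancel₀ _ hpos.ne'] at h1
    linarith
  by_cases hact : ipV (a j).1 x + (a j).2 * r = b j
  · have hdir : ipV (a j).1 w + (a j).2 * κ = 0 := by
      rcases hγ.lt_or_eq with hneg | hzero
      · have hm := hsub ((-(a j).2)⁻¹ • (a j).1) (hfinite _ (by
          intro z s hz
          have h1 := (hmem z s).1 hz.le j
          rw [ipV_smul_left, ipV_sub_right]
          have h2 : (-(a j).2)⁻¹ * (ipV (a j).1 z - ipV (a j).1 x) ≤ s - r := by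
            rw [inv_mul_le_iff₀ (by linarith)]
            nlinarith
          linarith))
        rw [ipV_smul_left, inv_mul_eq_iff_eq_mul₀ (by linarith)] at hm
        rw [hm]; ring
      · obtain ⟨c, hc⟩ := hne
        have hm := hsub (c + (a j).1) (hfinite _ (by
          intro z s hz
          have h1 := (hmem z s).1 hz.le j
          have h2 := hc z
          rw [hr, hz, ← EReal.coe_add, EReal.coe_le_coe_iff] at h2
          rw [ipV_add_left, ipV_sub_right (a j).1]
          rw [hzero] at h1 hact
          linarith))
        have hm2 := hsub c hc
        rw [ipV_add_left] at hm
        rw [hzero]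
        linarith
    refine Eventually.of_forall fun t => ?_
    rw [ipV_add_right, ipV_smul_right]
    have : ipV (a j).1 x + t * ipV (a j).1 w + (a j).2 * (r + t * κ)
      = (ipV (a j).1 x + (a j).2 * r) + t * (ipV (a j).1 w + (a j).2 * κ) := by ring
    rw [this, hdir, hact]; simp
  · have hlt : ipV (a j).1 x + (a j).2 * r < b j := lt_of_le_of_ne (hx j) hact
    have hcont : Tendsto (fun t : ℝ => ipV (a j).1 x + t * ipV (a j).1 w + (a j).2 * (r + t * κ))
        (𝓝[>] 0) (𝓝 (ipV (a j).1 x + 0 * ipV (a j).1 w + (a j).2 * (r + 0 * κ))) := by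
      apply Tendsto.mono_left _ nhdsWithin_le_nhds
      apply Continuous.tendsto
      fun_prop
    have := hcont.eventually_lt_const (u := b j) (by simpa using hlt)
    filter_upwards [this] with t ht
    rw [ipV_add_right, ipV_smul_right]
    exact ht.le

/-! ## Matrix decomposition, orthogonal curves and trace identities -/

/-- Splitting of a matrix into a part commuting with `X` and a double commutator. -/
lemma exists_decomp {n : ℕ} (X : Matrix (Fin n) (Fin n) ℝ) (hX : Xᵀ = X) :
    ∃ T : Matrix (Fin n) (Fin n) ℝ →ₗ[ℝ] Matrix (Fin n) (Fin n) ℝ,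
      (∀ W, Wᵀ = W → (T W)ᵀ = T W) ∧
      ∀ W, (W - ((T W * X - X * T W) * X - X * (T W * X - X * T W))) * X
        = X * (W - ((T W * X - X * T W) * X - X * (T W * X - X * T W))) := by
  classical
  obtain ⟨U, x, hU, hXU⟩ := exists_diag X hX
  have hU' : Uᵀ * U = 1 := mul_eq_one_comm.mp hU
  let c : Matrix (Fin n) (Fin n) ℝ :=
    Matrix.of fun i j => if x i = x j then 0 else ((x i - x j) ^ 2)⁻¹
  have hc : cᵀ = c := by
    ext i j
    simp only [c, Matrix.transpose_apply, Matrix.of_apply]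
    by_cases h : x i = x j
    · rw [if_pos h, if_pos h.symm]
    · rw [if_neg h, if_neg (Ne.symm h)]; congr 1; ring
  let T : Matrix (Fin n) (Fin n) ℝ →ₗ[ℝ] Matrix (Fin n) (Fin n) ℝ :=
    { toFun := fun W => U * (c ⊙ (Uᵀ * W * U)) * Uᵀ
      map_add' := by
        intro a b
        rw [Matrix.mul_add, Matrix.add_mul, Matrix.hadamard_add, Matrix.mul_add, Matrix.add_mul]
      map_smul' := by
        intro r a
        simp [Matrix.hadamard_smul] }
  refine ⟨T, ?_, ?_⟩
  · intro W hW
    change (U * (c ⊙ (Uᵀ * W * U)) * Uᵀ)ᵀ = U * (c ⊙ (Uᵀ * W * U)) * Uᵀ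
    have h1 : (c ⊙ (Uᵀ * W * U))ᵀ = c ⊙ (Uᵀ * W * U) := by
      ext i j
      have h2 : (Uᵀ * W * U)ᵀ = Uᵀ * W * U := by simp [hW, Matrix.mul_assoc]
      have h3 := congrFun (congrFun h2 i) j
      have h4 := congrFun (congrFun hc i) j
      simp only [Matrix.transpose_apply] at h3 h4
      simp only [Matrix.transpose_apply, Matrix.hadamard_apply, h3, h4]
    rw [Matrix.transpose_mul, Matrix.transpose_mul, h1, Matrix.transpose_transpose,
      ← Matrix.mul_assoc]
  · intro W
    set H := Uᵀ * W * U with hH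
    have hW : W = U * H * Uᵀ := by
      have : U * H * Uᵀ = (U * Uᵀ) * W * (U * Uᵀ) := by rw [hH]; noncomm_ring
      rw [this, hU]; simp
    have hTW : T W = U * (c ⊙ H) * Uᵀ := rfl
    have hmul : ∀ P R : Matrix (Fin n) (Fin n) ℝ,
        (U * P * Uᵀ) * (U * R * Uᵀ) = U * (P * R) * Uᵀ := by
      intro P R
      calc (U * P * Uᵀ) * (U * R * Uᵀ) = U * P * (Uᵀ * U) * R * Uᵀ := by noncomm_ring
        _ = U * (P * R) * Uᵀ := by rw [hU']; noncomm_ring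
    have hsub : ∀ P R : Matrix (Fin n) (Fin n) ℝ,
        (U * P * Uᵀ) - (U * R * Uᵀ) = U * (P - R) * Uᵀ := by
      intro P R; noncomm_ring
    rw [hTW, hXU]
    nth_rewrite 1 [hW]
    nth_rewrite 1 [hW]
    simp only [hmul, hsub]
    congr 2
    ext i j
    simp only [Matrix.mul_diagonal, Matrix.diagonal_mul, Matrix.sub_apply, Matrix.hadamard_apply,
      c, Matrix.of_apply]
    by_cases h : x i = x j
    · rw [if_pos h, h]; ring
    · rw [if_neg h]
      have h' : x i - x j ≠ 0 := sub_ne_zero.mpr h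
      field_simp
      ring

/-- A curve of orthogonal matrices (Cayley transform) with prescribed second-order expansion. -/
lemma exists_orth_curve {n : ℕ} (S : Matrix (Fin n) (Fin n) ℝ) (hS : Sᵀ = -S) :
    ∃ M : ℝ → Matrix (Fin n) (Fin n) ℝ, Tendsto M (𝓝 0) (𝓝 ((1 / 2 : ℝ) • (S * S))) ∧
      ∀ᶠ t in 𝓝 (0 : ℝ), (1 + t • (S + t • M t)) * (1 + t • (S + t • M t))ᵀ = 1 := by
  let A : ℝ → Matrix (Fin n) (Fin n) ℝ := fun t => (t / 2) • S
  have hAT : ∀ t, (A t)ᵀ = -A t := by intro t; simp [A, hS]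
  have hdetc : Continuous fun t => (1 - A t).det := by
    apply Continuous.matrix_det
    fun_prop
  have hdet0 : (1 - A 0).det ≠ 0 := by simp [A]
  have hdet : ∀ᶠ t in 𝓝 (0 : ℝ), (1 - A t).det ≠ 0 :=
    hdetc.continuousAt.eventually_ne hdet0
  have hinv : Tendsto (fun t => (1 - A t)⁻¹) (𝓝 0) (𝓝 ((1 - A 0)⁻¹)) := by
    simp only [Matrix.inv_def, Ring.inverse_eq_inv']
    apply Tendsto.smul
    · exact (hdetc.continuousAt.inv₀ hdet0)
    · apply Continuous.tendsto
      apply Continuous.matrix_adjugate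
      fun_prop
  refine ⟨fun t => (1 / 2 : ℝ) • (S * S) + (t / 4) • ((1 - A t)⁻¹ * (S * S * S)), ?_, ?_⟩
  · have h1 : Tendsto (fun t : ℝ => t / 4) (𝓝 0) (𝓝 (0 / 4)) :=
      (continuous_id.div_const 4).tendsto 0
    have h2 : Tendsto (fun t => (1 - A t)⁻¹ * (S * S * S)) (𝓝 0)
        (𝓝 ((1 - A 0)⁻¹ * (S * S * S))) := hinv.mul tendsto_const_nhds
    have h3 := (h1.smul h2).const_add ((1 / 2 : ℝ) • (S * S))
    simpa using h3
  · filter_upwards [hdet] with t ht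
    have hu : IsUnit (1 - A t).det := ht.isUnit
    have hl : (1 - A t)⁻¹ * (1 - A t) = 1 := Matrix.nonsing_inv_mul _ hu
    have hT : (1 - A t)ᵀ = 1 + A t := by rw [Matrix.transpose_sub, hAT]; simp
    have hu2 : (1 + A t) * ((1 - A t)⁻¹)ᵀ = 1 := by
      rw [← hT, ← Matrix.transpose_mul, hl, Matrix.transpose_one]
    have hR : 1 + t • (S + t • ((1 / 2 : ℝ) • (S * S) + (t / 4) • ((1 - A t)⁻¹ * (S * S * S))))
        = (1 - A t)⁻¹ * (1 + A t) := by
      have e1 : (1 : Matrix (Fin n) (Fin n) ℝ) + A t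
          = (1 - A t) * (1 + t • S + (t ^ 2 / 2) • (S * S)) + (t ^ 3 / 4) • (S * S * S) := by
        simp only [A, Matrix.mul_add, Matrix.sub_mul, Matrix.one_mul, Matrix.mul_one,
          Matrix.smul_mul, Matrix.mul_smul, Matrix.mul_assoc]
        module
      have e2 : (1 - A t)⁻¹ * (1 + A t) = 1 + t • S + (t ^ 2 / 2) • (S * S)
          + (t ^ 3 / 4) • ((1 - A t)⁻¹ * (S * S * S)) := by
        conv_lhs => rw [e1]
        rw [Matrix.mul_add, ← Matrix.mul_assoc, hl, Matrix.one_mul, Matrix.mul_smul]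
      rw [e2]
      module
    rw [hR, Matrix.transpose_mul]
    have hT2 : (1 + A t)ᵀ = 1 - A t := by rw [← hT, Matrix.transpose_transpose]
    rw [hT2]
    calc (1 - A t)⁻¹ * (1 + A t) * ((1 - A t) * ((1 - A t)⁻¹)ᵀ)
        = (1 - A t)⁻¹ * ((1 + A t) * (1 - A t)) * ((1 - A t)⁻¹)ᵀ := by
          simp only [Matrix.mul_assoc]
      _ = (1 - A t)⁻¹ * ((1 - A t) * (1 + A t)) * ((1 - A t)⁻¹)ᵀ := by
          congr 2; noncomm_ring
      _ = ((1 - A t)⁻¹ * (1 - A t)) * ((1 + A t) * ((1 - A t)⁻¹)ᵀ) := by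
          simp only [Matrix.mul_assoc]
      _ = 1 := by rw [hl, hu2, Matrix.one_mul]

/-- The trace pairing of a matrix commuting with `X` against a commutator with `X` vanishes. -/
lemma trace_comm_zero {n : ℕ} (X A T : Matrix (Fin n) (Fin n) ℝ) (hA : A * X = X * A) :
    (A * (T * X - X * T)).trace = 0 := by
  rw [Matrix.mul_sub, Matrix.trace_sub, ← Matrix.mul_assoc, ← Matrix.mul_assoc,
    Matrix.trace_mul_comm (A * T), ← Matrix.mul_assoc, hA, sub_self]

/-- A matrix commuting with `X` pairs trivially with `[S, B]`, for `S = [T, X]` and `B` commuting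
with `X`. -/
lemma trace_comm_zero' {n : ℕ} (X Y B T : Matrix (Fin n) (Fin n) ℝ) (hY : Y * X = X * Y)
    (hB : B * X = X * B) :
    (Y * ((T * X - X * T) * B - B * (T * X - X * T))).trace = 0 := by
  have h := trace_comm_zero X (B * Y - Y * B) T (by
    rw [Matrix.sub_mul, Matrix.mul_sub]
    congr 1
    · rw [Matrix.mul_assoc, hY, ← Matrix.mul_assoc, hB, Matrix.mul_assoc]
    · rw [Matrix.mul_assoc, hB, ← Matrix.mul_assoc, hY, Matrix.mul_assoc])
  rw [← h]
  generalize T * X - X * T = S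
  rw [Matrix.mul_sub, Matrix.trace_sub, Matrix.sub_mul, Matrix.trace_sub, ← Matrix.mul_assoc,
    Matrix.trace_mul_comm (Y * S) B]
  simp only [Matrix.mul_assoc]

/-- Symmetry of the curvature form. -/
lemma trace_symm {n : ℕ} (X Y S S' : Matrix (Fin n) (Fin n) ℝ) (hY : Y * X = X * Y) :
    (Y * ((S' * X - X * S') * S - S * (S' * X - X * S'))).trace
      = (Y * ((S * X - X * S) * S' - S' * (S * X - X * S))).trace := by
  have h := trace_comm_zero X Y (S * S' - S' * S) hY
  have e : (S' * X - X * S') * S - S * (S' * X - X * S')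
      = ((S * X - X * S) * S' - S' * (S * X - X * S))
        - ((S * S' - S' * S) * X - X * (S * S' - S' * S)) := by noncomm_ring
  rw [e, Matrix.mul_sub, Matrix.trace_sub, h, sub_zero]

lemma trace_cyc {n : ℕ} (Y W S : Matrix (Fin n) (Fin n) ℝ) :
    ((S * Y - Y * S) * W).trace = (Y * (W * S - S * W)).trace := by
  rw [Matrix.sub_mul, Matrix.trace_sub, Matrix.mul_sub, Matrix.trace_sub, Matrix.mul_assoc,
    Matrix.trace_mul_comm S]
  simp only [Matrix.mul_assoc]

/-! ## Second-order difference quotients -/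

lemma sdq2_lower {E : Type*} [AddCommGroup E] [Module ℝ E] (ip : E → E → ℝ)
    (f : E → EReal) (x v w : E) (t c d : ℝ) (ht : 0 < t) (hc : f x = (c : EReal))
    (hd : ((c + d : ℝ) : EReal) ≤ f (x + t • w)) :
    ((2 / t ^ 2 * (d - t * ip v w) : ℝ) : EReal) ≤ sdq2 ip f x v t w := by
  have h2 : (0 : ℝ) < 2 / t ^ 2 := by positivity
  unfold sdq2
  rw [hc, EReal.coe_mul]
  apply mul_le_mul_of_nonneg_left _ (by exact_mod_cast h2.le)
  have e : ((d - t * ip v w : ℝ) : EReal) = ((c + d : ℝ) : EReal) - c - ((t * ip v w : ℝ) : EReal) := by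
    rw [← EReal.coe_sub, ← EReal.coe_sub]; congr 1; ring
  rw [e]
  exact EReal.sub_le_sub (EReal.sub_le_sub hd le_rfl) le_rfl

lemma sdq2_eq {E : Type*} [AddCommGroup E] [Module ℝ E] (ip : E → E → ℝ)
    (f : E → EReal) (x v w : E) (t c d : ℝ) (hc : f x = (c : EReal))
    (hd : f (x + t • w) = ((c + d : ℝ) : EReal)) :
    sdq2 ip f x v t w = ((2 / t ^ 2 * (d - t * ip v w) : ℝ) : EReal) := by
  unfold sdq2
  rw [hc, hd, ← EReal.coe_sub, ← EReal.coe_sub, ← EReal.coe_mul]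
  congr 1; ring

lemma conj_expand {n : ℕ} (P Z : Matrix (Fin n) (Fin n) ℝ) (t : ℝ) :
    (1 + t • P) * Z * (1 + t • P)ᵀ = Z + t • (P * Z + Z * Pᵀ + t • (P * Z * Pᵀ)) := by
  rw [Matrix.transpose_add, Matrix.transpose_one, Matrix.transpose_smul]
  simp only [Matrix.mul_add, Matrix.add_mul, Matrix.one_mul, Matrix.mul_one,
          Matrix.smul_mul, Matrix.mul_smul]
  module

/-- Conjugation of a symmetric matrix, as a symmetric matrix. -/
def conjSym {n : ℕ} (R : Matrix (Fin n) (Fin n) ℝ) (Z : Sym n) : Sym n :=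
  ⟨R * Z.val * Rᵀ, by
    change (R * Z.val * Rᵀ)ᵀ = R * Z.val * Rᵀ
    have hZ : (Z.val)ᵀ = Z.val := Z.2
    simp [hZ, Matrix.mul_assoc]⟩

/-- Lower estimate obtained from orthogonal invariance and the subgradient inequality. -/
lemma orth_lower {n : ℕ} {θ : (Fin n → ℝ) → EReal} (hsym : SymmetricFn θ) (X Y Z : Sym n) (c : ℝ)
    (hc : specFn θ X = (c : EReal)) (hY : Y ∈ convexSubdiff ipM (specFn θ) X)
    (R : Matrix (Fin n) (Fin n) ℝ) (hR : R * Rᵀ = 1) :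
    ((c + (Y.val * (R * Z.val * Rᵀ - X.val)).trace : ℝ) : EReal) ≤ specFn θ Z := by
  have h := hY (conjSym R Z)
  rw [specFn_conj hsym Z (conjSym R Z) R hR rfl, hc, ← EReal.coe_add] at h
  exact h

/-- Subgradients of the spectral function commute with the base point. -/
lemma subgrad_comm {n : ℕ} {θ : (Fin n → ℝ) → EReal} (hsym : SymmetricFn θ) (X Y : Sym n) (c : ℝ)
    (hc : specFn θ X = (c : EReal)) (hY : Y ∈ convexSubdiff ipM (specFn θ) X) :
    Y.val * X.val = X.val * Y.val := by
  have hXT : (X.val)ᵀ = X.val := X.2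
  have hYT : (Y.val)ᵀ = Y.val := Y.2
  have hle : ∀ S : Matrix (Fin n) (Fin n) ℝ, Sᵀ = -S →
      (Y.val * (S * X.val - X.val * S)).trace ≤ 0 := by
    intro S hS
    obtain ⟨M, hM, hR⟩ := exists_orth_curve S hS
    have hF : Continuous fun p : Matrix (Fin n) (Fin n) ℝ × ℝ =>
        (Y.val * ((S + p.2 • p.1) * X.val + X.val * (S + p.2 • p.1)ᵀ
          + p.2 • ((S + p.2 • p.1) * X.val * (S + p.2 • p.1)ᵀ))).trace := by
      apply Continuous.matrix_trace
      fun_prop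
    have hlim := (hF.tendsto ((1 / 2 : ℝ) • (S * S), 0)).comp
      (hM.prodMk_nhds (tendsto_id (x := 𝓝 (0 : ℝ))))
    have hval : (Y.val * (S * X.val - X.val * S)).trace
      = (Y.val * ((S + (0 : ℝ) • ((1 / 2 : ℝ) • (S * S))) * X.val
          + X.val * (S + (0 : ℝ) • ((1 / 2 : ℝ) • (S * S)))ᵀ
          + (0 : ℝ) • ((S + (0 : ℝ) • ((1 / 2 : ℝ) • (S * S))) * X.val
            * (S + (0 : ℝ) • ((1 / 2 : ℝ) • (S * S)))ᵀ))).trace := by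
      simp [hS, sub_eq_add_neg]
    rw [hval]
    refine le_of_tendsto (hlim.mono_left (nhdsWithin_le_nhds (s := Set.Ioi 0))) ?_
    filter_upwards [hR.filter_mono nhdsWithin_le_nhds, self_mem_nhdsWithin] with t ht htpos
    have h := orth_lower hsym X Y X c hc hY _ ht
    rw [hc, EReal.coe_le_coe_iff, conj_expand, add_sub_cancel_left, Matrix.mul_smul,
      Matrix.trace_smul, smul_eq_mul] at h
    have htpos' : (0 : ℝ) < t := htpos
    by_contra hcon
    push Not at hcon
    have := mul_pos htpos' hcon
    simp only [Function.comp, id] at this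
    linarith
  set S := X.val * Y.val - Y.val * X.val with hSdef
  have hS : Sᵀ = -S := by
    rw [hSdef, Matrix.transpose_sub, Matrix.transpose_mul, Matrix.transpose_mul, hXT, hYT]
    abel
  have h1 := hle (-S) (by rw [Matrix.transpose_neg, hS])
  have e1 : (Y.val * (-S * X.val - X.val * -S)).trace = (S * Sᵀ).trace := by
    have := trace_cyc (n := n) Y.val S X.val
    rw [← hSdef] at this
    have e : Y.val * (-S * X.val - X.val * -S) = -(Y.val * (S * X.val - X.val * S)) := by
      noncomm_ring
    rw [e, Matrix.trace_neg, ← this, hS, Matrix.mul_neg, Matrix.trace_neg]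
  rw [e1, ← Matrix.conjTranspose_eq_transpose_of_trivial] at h1
  have h2 : 0 ≤ (S * Sᴴ).trace := (Matrix.posSemidef_self_mul_conjTranspose S).trace_nonneg
  have h3 := Matrix.trace_mul_conjTranspose_self_eq_zero_iff.mp (le_antisymm h1 h2)
  rw [hSdef] at h3
  exact (sub_eq_zero.mp h3).symm

lemma trace_conj_diag_mul {n : ℕ} (Q A : Matrix (Fin n) (Fin n) ℝ) (w : Fin n → ℝ) :
    (A * (Q * diagonal w * Qᵀ)).trace = ipV (fun i => (Qᵀ * A * Q) i i) w := by
  have : (A * (Q * diagonal w * Qᵀ)).trace = ((Qᵀ * A * Q) * diagonal w).trace := by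
    rw [← Matrix.mul_assoc, Matrix.trace_mul_comm]
    congr 1
    noncomm_ring
  rw [this]
  simp [Matrix.trace, ipV, Matrix.mul_diagonal]

/-- Exact first-order behaviour along critical directions commuting with the base point. -/
lemma spec_dir {n : ℕ} {θ : (Fin n → ℝ) → EReal} (hsym : SymmetricFn θ)
    (hbot : ∀ x, θ x ≠ ⊥) (hpoly : IsPolyhedral (ipProd ipV) (epiSet θ)) (X Y B : Sym n) (c : ℝ)
    (hc : specFn θ X = (c : EReal)) (hY : Y ∈ convexSubdiff ipM (specFn θ) X)
    (hB : B.val * X.val = X.val * B.val)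
    (hcrit : ∀ Y' ∈ convexSubdiff ipM (specFn θ) X, ipM Y' B = ipM Y B) :
    ∀ᶠ t : ℝ in 𝓝[>] 0, specFn θ (X + t • B) = ((c + t * ipM Y B : ℝ) : EReal) := by
  obtain ⟨Q, x, w, hQ, hXQ, hBQ⟩ := exists_simul_diag X.val B.val X.2 B.2 hB
  have hQ' : Qᵀ * Q = 1 := mul_eq_one_comm.mp hQ
  have hx : θ x = (c : EReal) := by rw [← hc, specFn_diag hsym X Q x hQ hXQ]
  have hne : (convexSubdiff ipV θ x).Nonempty := by
    refine ⟨fun i => (Qᵀ * Y.val * Q) i i, fun z => ?_⟩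
    have h := hY (conjSym Q (diagSym z))
    rw [specFn_diag hsym (conjSym Q (diagSym z)) Q z hQ rfl,
      specFn_diag hsym X Q x hQ hXQ, ipM_sub_right] at h
    have e1 : ipM Y (conjSym Q (diagSym z)) = ipV (fun i => (Qᵀ * Y.val * Q) i i) z :=
      trace_conj_diag_mul Q Y.val z
    have e2 : ipM Y X = ipV (fun i => (Qᵀ * Y.val * Q) i i) x := by
      rw [← trace_conj_diag_mul, ← hXQ]; rfl
    rw [e1, e2, ← ipV_sub_right] at h
    exact h
  have hsub : ∀ a ∈ convexSubdiff ipV θ x, ipV a w = ipM Y B := by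
    intro a ha
    have hA := subdiff_lift hsym hbot hpoly X (conjSym Q (diagSym a)) Q x a hQ hXQ rfl ha
    rw [← hcrit _ hA]
    change ipV a w = ((Q * diagonal a * Qᵀ) * B.val).trace
    rw [hBQ, trace_conj_diag_mul]
    have : Qᵀ * (Q * diagonal a * Qᵀ) * Q = diagonal a := by
      calc Qᵀ * (Q * diagonal a * Qᵀ) * Q = (Qᵀ * Q) * diagonal a * (Qᵀ * Q) := by noncomm_ring
        _ = diagonal a := by rw [hQ']; simp
    rw [this]; simp
  filter_upwards [poly_dir hpoly hbot x w c (ipM Y B) hx hne hsub] with t ht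
  have hXt : specFn θ (X + t • B) = θ (x + t • w) := by
    apply specFn_diag hsym _ Q _ hQ
    change X.val + t • B.val = _
    have hdg : diagonal (x + t • w) = diagonal x + t • diagonal w := by
      rw [← Matrix.diagonal_smul]; exact (Matrix.diagonal_add _ _).symm
    rw [hdg, Matrix.mul_add, Matrix.add_mul, ← hXQ,
      Matrix.mul_smul, Matrix.smul_mul, ← hBQ]
  apply le_antisymm
  · rw [hXt]; exact ht
  · have h := hY (X + t • B)
    rw [hc, ← EReal.coe_add] at h
    convert h using 4
    simp [ipM]

/-- Lower estimate for the second-order difference quotients. -/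
lemma second_lower {n : ℕ} {θ : (Fin n → ℝ) → EReal} (hsym : SymmetricFn θ) (X Y W : Sym n) (c : ℝ)
    (hc : specFn θ X = (c : EReal)) (hY : Y ∈ convexSubdiff ipM (specFn θ) X)
    (hYX : Y.val * X.val = X.val * Y.val)
    (S : Matrix (Fin n) (Fin n) ℝ) (hS : Sᵀ = -S) (q : ℝ)
    (h1 : (Y.val * (W.val * S - S * W.val)).trace = q)
    (h2 : (Y.val * (S * S * X.val + X.val * (S * S) - (2 : ℝ) • (S * X.val * S))).trace = -q) :
    ∃ K : ℝ × Sym n → ℝ, Tendsto K ((𝓝[>] (0 : ℝ)) ×ˢ 𝓝 W) (𝓝 q) ∧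
      ∀ᶠ p in (𝓝[>] (0 : ℝ)) ×ˢ 𝓝 W,
        ((K p : ℝ) : EReal) ≤ sdq2 ipM (specFn θ) X Y p.1 p.2 := by
  have hS' : (-S)ᵀ = -(-S) := by rw [Matrix.transpose_neg, hS]
  obtain ⟨M, hM, hR⟩ := exists_orth_curve (-S) hS'
  let F : Matrix (Fin n) (Fin n) ℝ × ℝ × Matrix (Fin n) (Fin n) ℝ → ℝ := fun p =>
    2 * (Y.val * (p.1 * X.val + X.val * p.1ᵀ + (-S + p.2.1 • p.1) * X.val * (-S + p.2.1 • p.1)ᵀ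
      + ((-S + p.2.1 • p.1) * p.2.2 + p.2.2 * (-S + p.2.1 • p.1)ᵀ
        + p.2.1 • ((-S + p.2.1 • p.1) * p.2.2 * (-S + p.2.1 • p.1)ᵀ)))).trace
  have hF : Continuous F := by
    apply Continuous.mul continuous_const
    apply Continuous.matrix_trace
    fun_prop
  have t1 : Tendsto (fun p : ℝ × Sym n => p.1) ((𝓝[>] (0 : ℝ)) ×ˢ 𝓝 W) (𝓝 0) :=
    tendsto_fst.mono_right nhdsWithin_le_nhds
  have t2 : Tendsto (fun p : ℝ × Sym n => p.2.val) ((𝓝[>] (0 : ℝ)) ×ˢ 𝓝 W) (𝓝 W.val) :=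
    (continuous_subtype_val.tendsto W).comp tendsto_snd
  have hlim := (hF.tendsto ((1 / 2 : ℝ) • (-S * -S), 0, W.val)).comp
    ((hM.comp t1).prodMk_nhds (t1.prodMk_nhds t2))
  have hval : F ((1 / 2 : ℝ) • (-S * -S), 0, W.val) = q := by
    have e : Y.val * ((1 / 2 : ℝ) • (-S * -S) * X.val + X.val * ((1 / 2 : ℝ) • (-S * -S))ᵀ
        + (-S + (0 : ℝ) • ((1 / 2 : ℝ) • (-S * -S))) * X.val
          * (-S + (0 : ℝ) • ((1 / 2 : ℝ) • (-S * -S)))ᵀ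
      + ((-S + (0 : ℝ) • ((1 / 2 : ℝ) • (-S * -S))) * W.val
        + W.val * (-S + (0 : ℝ) • ((1 / 2 : ℝ) • (-S * -S)))ᵀ
        + (0 : ℝ) • ((-S + (0 : ℝ) • ((1 / 2 : ℝ) • (-S * -S))) * W.val
          * (-S + (0 : ℝ) • ((1 / 2 : ℝ) • (-S * -S)))ᵀ)))
      = (1 / 2 : ℝ) • (Y.val * (S * S * X.val + X.val * (S * S) - (2 : ℝ) • (S * X.val * S)))
        + Y.val * (W.val * S - S * W.val) := by
      simp only [zero_smul, add_zero, Matrix.transpose_neg, Matrix.transpose_smul,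
        Matrix.transpose_mul, hS, neg_neg, Matrix.neg_mul, Matrix.mul_neg, Matrix.smul_mul,
        Matrix.mul_smul, Matrix.mul_add, Matrix.mul_sub]
      module
    change 2 * (Y.val * _).trace = q
    rw [e, Matrix.trace_add, Matrix.trace_smul, h1, h2, smul_eq_mul]
    ring
  rw [hval] at hlim
  refine ⟨_, hlim, ?_⟩
  have hpos : ∀ᶠ p : ℝ × Sym n in (𝓝[>] (0 : ℝ)) ×ˢ 𝓝 W, 0 < p.1 :=
    tendsto_fst.eventually self_mem_nhdsWithin
  filter_upwards [t1.eventually hR, hpos] with p hp hp0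
  have h := orth_lower hsym X Y (X + p.1 • p.2) c hc hY _ hp
  refine le_trans (le_of_eq ?_) (sdq2_lower ipM (specFn θ) X Y p.2 p.1 c _ hp0 hc h)
  congr 1
  have hz : (Y.val * (-S * X.val - X.val * -S)).trace = 0 := trace_comm_zero X.val Y.val (-S) hYX
  have hv : ((X + p.1 • p.2 : Sym n) : Matrix (Fin n) (Fin n) ℝ) = X.val + p.1 • p.2.val := rfl
  rw [conj_expand, hv]
  change F (M p.1, p.1, p.2.val) = _
  have e : Y.val * (X.val + p.1 • p.2.val + p.1 • ((-S + p.1 • M p.1) * (X.val + p.1 • p.2.val)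
        + (X.val + p.1 • p.2.val) * (-S + p.1 • M p.1)ᵀ
        + p.1 • ((-S + p.1 • M p.1) * (X.val + p.1 • p.2.val) * (-S + p.1 • M p.1)ᵀ)) - X.val)
      = p.1 • (Y.val * p.2.val) + p.1 • (Y.val * (-S * X.val - X.val * -S))
        + (p.1 ^ 2) • (Y.val * (M p.1 * X.val + X.val * (M p.1)ᵀ
          + (-S + p.1 • M p.1) * X.val * (-S + p.1 • M p.1)ᵀ
          + ((-S + p.1 • M p.1) * p.2.val + p.2.val * (-S + p.1 • M p.1)ᵀ
          + p.1 • ((-S + p.1 • M p.1) * p.2.val * (-S + p.1 • M p.1)ᵀ)))) := by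
    simp only [Matrix.transpose_add, Matrix.transpose_neg, Matrix.transpose_smul, hS,
      Matrix.mul_add, Matrix.add_mul, Matrix.mul_sub, Matrix.neg_mul, Matrix.mul_neg,
      Matrix.smul_mul, Matrix.mul_smul, neg_neg]
    module
  rw [e, Matrix.trace_add, Matrix.trace_add, Matrix.trace_smul, Matrix.trace_smul,
    Matrix.trace_smul, hz]
  simp only [smul_eq_mul, mul_zero, add_zero, ipM, F]
  have hne : p.1 ≠ 0 := hp0.ne'
  field_simp
  ring

/-- Recovery curves for critical directions. -/
lemma second_upper {n : ℕ} {θ : (Fin n → ℝ) → EReal} (hsym : SymmetricFn θ)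
    (X Y W B : Sym n) (c : ℝ)
    (hc : specFn θ X = (c : EReal))
    (S : Matrix (Fin n) (Fin n) ℝ) (hS : Sᵀ = -S) (q : ℝ)
    (hW : W.val = B.val + (S * X.val - X.val * S))
    (hYW : ipM Y B = ipM Y W)
    (hdir : ∀ᶠ t : ℝ in 𝓝[>] 0, specFn θ (X + t • B) = ((c + t * ipM Y B : ℝ) : EReal))
    (h1 : (Y.val * (S * B.val - B.val * S)).trace = 0)
    (h2 : (Y.val * (S * S * X.val + X.val * (S * S) - (2 : ℝ) • (S * X.val * S))).trace = -q) :
    ∃ Wt : ℝ → Sym n, Tendsto Wt (𝓝[>] 0) (𝓝 W) ∧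
      Tendsto (fun t => sdq2 ipM (specFn θ) X Y t (Wt t)) (𝓝[>] 0) (𝓝 (q : EReal)) := by
  have hXT : (X.val)ᵀ = X.val := X.2
  have hBT : (B.val)ᵀ = B.val := B.2
  obtain ⟨M, hM, hR⟩ := exists_orth_curve S hS
  let F : Matrix (Fin n) (Fin n) ℝ × ℝ → Matrix (Fin n) (Fin n) ℝ := fun p =>
    p.1 * X.val + X.val * p.1ᵀ + (S + p.2 • p.1) * X.val * (S + p.2 • p.1)ᵀ
      + ((S + p.2 • p.1) * B.val + B.val * (S + p.2 • p.1)ᵀ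
        + p.2 • ((S + p.2 • p.1) * B.val * (S + p.2 • p.1)ᵀ))
  have hF : Continuous F := by fun_prop
  have hFs : ∀ p, (F p)ᵀ = F p := by
    intro p
    simp only [F, Matrix.transpose_add, Matrix.transpose_mul, Matrix.transpose_smul,
      Matrix.transpose_transpose, hXT, hBT, Matrix.mul_assoc]
    abel
  have hlim : Tendsto (fun t => F (M t, t)) (𝓝[>] 0) (𝓝 (F ((1 / 2 : ℝ) • (S * S), 0))) :=
    ((hF.tendsto ((1 / 2 : ℝ) • (S * S), 0)).comp
      (hM.prodMk_nhds (tendsto_id (x := 𝓝 (0 : ℝ))))).mono_left nhdsWithin_le_nhds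
  have hF0 : (Y.val * F ((1 / 2 : ℝ) • (S * S), 0)).trace = -q / 2 := by
    have e : Y.val * F ((1 / 2 : ℝ) • (S * S), 0)
        = (1 / 2 : ℝ) • (Y.val * (S * S * X.val + X.val * (S * S) - (2 : ℝ) • (S * X.val * S)))
        + Y.val * (S * B.val - B.val * S) := by
      simp only [F, zero_smul, add_zero, Matrix.transpose_smul,
        Matrix.transpose_mul, hS, neg_neg, Matrix.neg_mul, Matrix.mul_neg, Matrix.smul_mul,
        Matrix.mul_smul, Matrix.mul_add, Matrix.mul_sub]
      module
    rw [e, Matrix.trace_add, Matrix.trace_smul, h1, h2, smul_eq_mul]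
    ring
  let C : ℝ → Sym n := fun t => ⟨F (M t, t), hFs _⟩
  have t0 : Tendsto (fun t : ℝ => t) (𝓝[>] 0) (𝓝 0) := tendsto_id.mono_left nhdsWithin_le_nhds
  refine ⟨fun t => W + t • C t, ?_, ?_⟩
  · rw [tendsto_subtype_rng]
    have := (t0.smul hlim).const_add W.val
    simpa using this
  · have htr : Tendsto (fun t => (((-2) * (Y.val * F (M t, t)).trace : ℝ) : EReal)) (𝓝[>] 0)
        (𝓝 (q : EReal)) := by
      apply (continuous_coe_real_ereal.tendsto q).comp
      have hcont : Continuous fun Z : Matrix (Fin n) (Fin n) ℝ => (-2) * (Y.val * Z).trace := by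
        apply Continuous.mul continuous_const
        apply Continuous.matrix_trace
        fun_prop
      have := (hcont.tendsto _).comp hlim
      rw [hF0] at this
      have e : (-2) * (-q / 2) = q := by ring
      rw [e] at this
      exact this
    refine htr.congr' ?_
    filter_upwards [hdir, hR.filter_mono nhdsWithin_le_nhds, self_mem_nhdsWithin]
      with t hd hRt htpos
    have htpos' : (0 : ℝ) < t := htpos
    have hZ : specFn θ (X + t • (W + t • C t)) = ((c + t * ipM Y W : ℝ) : EReal) := by
      rw [← hYW, ← hd]
      apply specFn_conj hsym _ _ _ hRt
      rw [conj_expand]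
      change X.val + t • (W.val + t • F (M t, t)) = X.val + t • B.val
        + t • ((S + t • M t) * (X.val + t • B.val) + (X.val + t • B.val) * (S + t • M t)ᵀ
        + t • ((S + t • M t) * (X.val + t • B.val) * (S + t • M t)ᵀ))
      rw [hW]
      simp only [F, Matrix.transpose_add, Matrix.transpose_smul, hS,
        Matrix.mul_add, Matrix.add_mul, Matrix.mul_neg,
        Matrix.smul_mul, Matrix.mul_smul]
      module
    rw [sdq2_eq ipM (specFn θ) X Y _ t c _ hc hZ]
    congr 1
    have hip : ipM Y (W + t • C t) = ipM Y W + t * (Y.val * F (M t, t)).trace := by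
      change (Y.val * (W.val + t • F (M t, t))).trace = _
      rw [Matrix.mul_add, Matrix.trace_add, Matrix.mul_smul, Matrix.trace_smul, smul_eq_mul]
      rfl
    rw [hip]
    field_simp
    ring

/-- Outside the critical subspace the difference quotients blow up. -/
lemma second_top {n : ℕ} {f : Sym n → EReal} (X Y W : Sym n) (c : ℝ)
    (hc : f X = (c : EReal)) (hY : Y ∈ relInterior (convexSubdiff ipM f X))
    (hW : ¬ ∀ Y' ∈ convexSubdiff ipM f X, ipM Y' W = ipM Y W) :
    Tendsto (fun p : ℝ × Sym n => sdq2 ipM f X Y p.1 p.2) ((𝓝[>] (0 : ℝ)) ×ˢ 𝓝 W) (𝓝 ⊤) := by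
  have hex : ∃ Y' ∈ convexSubdiff ipM f X, ipM Y W < ipM Y' W := by
    push Not at hW
    obtain ⟨Y', hY', hne⟩ := hW
    rcases lt_or_gt_of_ne hne with hlt | hgt
    · obtain ⟨hYm, V, hV, hVs⟩ := hY
      have hcont : Tendsto (fun ε : ℝ => AffineMap.lineMap Y Y' (-ε)) (𝓝[>] 0) (𝓝 Y) := by
        have : Continuous fun ε : ℝ => Y + (-ε) • (Y' - Y) := by fun_prop
        have h := (this.tendsto 0).mono_left (nhdsWithin_le_nhds (s := Set.Ioi 0))
        simp only [neg_zero, zero_smul, add_zero] at h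
        refine h.congr fun ε => ?_
        rw [AffineMap.lineMap_apply, vsub_eq_sub, vadd_eq_add, add_comm]
      obtain ⟨ε, hε, hε0⟩ := ((hcont.eventually hV).and self_mem_nhdsWithin).exists
      have hε0' : (0 : ℝ) < ε := hε0
      refine ⟨_, hVs _ hε (AffineMap.lineMap_mem _ (subset_affineSpan ℝ _ hYm)
        (subset_affineSpan ℝ _ hY')), ?_⟩
      have : ipM (AffineMap.lineMap Y Y' (-ε)) W = ipM Y W + ε * (ipM Y W - ipM Y' W) := by
        rw [AffineMap.lineMap_apply]
        simp only [vsub_eq_sub, vadd_eq_add, ipM]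
        change (((-ε) • (Y'.val - Y.val) + Y.val) * W.val).trace = _
        rw [Matrix.add_mul, Matrix.trace_add, Matrix.smul_mul, Matrix.trace_smul, Matrix.sub_mul,
          Matrix.trace_sub, smul_eq_mul]
        ring
      rw [this]
      have := mul_pos hε0' (sub_pos.mpr hlt)
      linarith
    · exact ⟨Y', hY', hgt⟩
  obtain ⟨Y', hY', hlt⟩ := hex
  have hipc : ∀ A : Sym n, Continuous fun Z : Sym n => ipM A Z := by
    intro A
    apply Continuous.matrix_trace
    exact continuous_const.mul continuous_subtype_val
  have hd : Tendsto (fun p : ℝ × Sym n => ipM Y' p.2 - ipM Y p.2) ((𝓝[>] (0 : ℝ)) ×ˢ 𝓝 W)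
      (𝓝 (ipM Y' W - ipM Y W)) :=
    (((hipc Y').sub (hipc Y)).tendsto W).comp tendsto_snd
  have hinv : Tendsto (fun p : ℝ × Sym n => p.1⁻¹) ((𝓝[>] (0 : ℝ)) ×ˢ 𝓝 W) atTop :=
    tendsto_inv_nhdsGT_zero.comp tendsto_fst
  have hK : Tendsto (fun p : ℝ × Sym n => p.1⁻¹ * (ipM Y' p.2 - ipM Y p.2))
      ((𝓝[>] (0 : ℝ)) ×ˢ 𝓝 W) atTop :=
    hinv.atTop_mul_pos (sub_pos.mpr hlt) hd
  have hK2 : Tendsto (fun p : ℝ × Sym n => 2 * (p.1⁻¹ * (ipM Y' p.2 - ipM Y p.2)))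
      ((𝓝[>] (0 : ℝ)) ×ˢ 𝓝 W) atTop := hK.const_mul_atTop (by norm_num)
  have hKE := EReal.tendsto_coe_nhds_top_iff.mpr hK2
  refine tendsto_of_tendsto_of_tendsto_of_le_of_le' hKE tendsto_const_nhds ?_
    (Eventually.of_forall fun _ => le_top)
  have hpos : ∀ᶠ p : ℝ × Sym n in (𝓝[>] (0 : ℝ)) ×ˢ 𝓝 W, 0 < p.1 :=
    tendsto_fst.eventually self_mem_nhdsWithin
  filter_upwards [hpos] with p hp
  have h := hY' (X + p.1 • p.2)
  rw [hc, ← EReal.coe_add] at h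
  refine le_trans (le_of_eq ?_) (sdq2_lower ipM f X Y p.2 p.1 c _ hp hc h)
  congr 1
  have : ipM Y' (X + p.1 • p.2 - X) = p.1 * ipM Y' p.2 := by
    rw [add_sub_cancel_left]; simp [ipM]
  rw [this]
  have hne : p.1 ≠ 0 := hp.ne'
  field_simp

/-- The value of the second subderivative and recovery sequences, on the critical subspace. -/
lemma second_value {n : ℕ} {θ : (Fin n → ℝ) → EReal} (X Y W : Sym n) (q : ℝ)
    (hlow : ∃ K : ℝ × Sym n → ℝ, Tendsto K ((𝓝[>] (0 : ℝ)) ×ˢ 𝓝 W) (𝓝 q) ∧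
      ∀ᶠ p in (𝓝[>] (0 : ℝ)) ×ˢ 𝓝 W,
        ((K p : ℝ) : EReal) ≤ sdq2 ipM (specFn θ) X Y p.1 p.2)
    (hup : ∃ Wt : ℝ → Sym n, Tendsto Wt (𝓝[>] 0) (𝓝 W) ∧
      Tendsto (fun t => sdq2 ipM (specFn θ) X Y t (Wt t)) (𝓝[>] 0) (𝓝 (q : EReal))) :
    subderiv2 ipM (specFn θ) X Y W = (q : EReal) := by
  obtain ⟨K, hK, hle⟩ := hlow
  obtain ⟨Wt, hWt, hq⟩ := hup
  apply le_antisymm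
  · have hp : Tendsto (fun t : ℝ => (t, Wt t)) (𝓝[>] 0) ((𝓝[>] (0 : ℝ)) ×ˢ 𝓝 W) :=
      tendsto_id.prodMk hWt
    have h1 : subderiv2 ipM (specFn θ) X Y W ≤
        liminf (fun p : ℝ × Sym n => sdq2 ipM (specFn θ) X Y p.1 p.2)
          (map (fun t : ℝ => (t, Wt t)) (𝓝[>] 0)) := liminf_le_liminf_of_le hp
    have h2 : liminf (fun p : ℝ × Sym n => sdq2 ipM (specFn θ) X Y p.1 p.2)
          (map (fun t : ℝ => (t, Wt t)) (𝓝[>] 0)) = (q : EReal) :=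
      Tendsto.liminf_eq (tendsto_map'_iff.mpr hq)
    exact h1.trans h2.le
  · have h1 : liminf (fun p => ((K p : ℝ) : EReal)) ((𝓝[>] (0 : ℝ)) ×ˢ 𝓝 W) = (q : EReal) :=
      Tendsto.liminf_eq ((continuous_coe_real_ereal.tendsto q).comp hK)
    rw [← h1]
    exact liminf_le_liminf hle

/-- Abstract assembly. -/
lemma gen_twice_diff_of {n : ℕ} {f : Sym n → EReal} (X Y : Sym n) (hfin : IsFiniteAt f X)
    (crit : Sym n → Prop) (h0 : crit 0) (hadd : ∀ V W, crit V → crit W → crit (V + W))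
    (hsmul : ∀ (c : ℝ) W, crit W → crit (c • W))
    (L : Sym n → Sym n) (hLadd : ∀ V W, L (V + W) = L V + L W)
    (hLsmul : ∀ (c : ℝ) W, L (c • W) = c • L W)
    (hLsym : ∀ V W, ipM (L V) W = ipM V (L W))
    (hval : ∀ W, crit W → subderiv2 ipM f X Y W = ((ipM (L W) W : ℝ) : EReal))
    (hrec : ∀ W, crit W → ∃ Wt : ℝ → Sym n, Tendsto Wt (𝓝[>] 0) (𝓝 W) ∧
      Tendsto (fun t => sdq2 ipM f X Y t (Wt t)) (𝓝[>] 0) (𝓝 ((ipM (L W) W : ℝ) : EReal)))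
    (htop : ∀ W, ¬ crit W →
      Tendsto (fun p : ℝ × Sym n => sdq2 ipM f X Y p.1 p.2) ((𝓝[>] (0 : ℝ)) ×ˢ 𝓝 W) (𝓝 ⊤)) :
    GenTwiceDiff ipM f X Y := by
  have hvt : ∀ W, ¬ crit W → subderiv2 ipM f X Y W = ⊤ := fun W hW => (htop W hW).liminf_eq
  have hiff : ∀ W, subderiv2 ipM f X Y W ≠ ⊤ → crit W := by
    intro W h
    by_contra hW
    exact h (hvt W hW)
  have hiff' : ∀ W, crit W → subderiv2 ipM f X Y W ≠ ⊤ := by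
    intro W h
    rw [hval W h]
    exact EReal.coe_ne_top _
  refine ⟨⟨hfin, ?_⟩, hiff' _ h0, fun V W hV hW => hiff' _ (hadd V W (hiff V hV) (hiff W hW)),
    fun c W hW => hiff' _ (hsmul c W (hiff W hW)), L, fun V W _ _ => hLadd V W,
    fun c W _ => hLsmul c W, fun V W _ _ => hLsym V W, fun W hW => hval W (hiff W hW)⟩
  intro t ht0 ht W
  have ht' : Tendsto t atTop (𝓝[>] 0) :=
    tendsto_nhdsWithin_iff.mpr ⟨ht, Eventually.of_forall ht0⟩
  by_cases hW : crit W
  · obtain ⟨Wt, h1, h2⟩ := hrec W hW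
    refine ⟨fun k => Wt (t k), h1.comp ht', ?_⟩
    rw [hval W hW]
    exact h2.comp ht'
  · refine ⟨fun _ => W, tendsto_const_nhds, ?_⟩
    rw [hvt W hW]
    have hp : Tendsto (fun k => (t k, W)) atTop ((𝓝[>] (0 : ℝ)) ×ˢ 𝓝 W) :=
      ht'.prodMk (tendsto_const_nhds (x := W))
    have h := Tendsto.comp (htop W hW) hp
    simp only [Function.comp_def] at h
    exact h

/-- Corollary 4.2: for a symmetric proper polyhedral convex `θ`, the spectral
function `g = θ ∘ λ` is generalized twice differentiable at `X` for any
`Y ∈ ri ∂g(X)`. -/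
theorem polyhedral_gen_twice_diff {n : ℕ} (θ : (Fin n → ℝ) → EReal) (X Y : Sym n)
    (hsym : SymmetricFn θ)
    (hproper : (∃ x : Fin n → ℝ, θ x ≠ ⊤) ∧ ∀ x : Fin n → ℝ, θ x ≠ ⊥)
    (hpoly : IsPolyhedral (ipProd ipV) (epiSet θ))
    (hfin : IsFiniteAt θ (eigval X.val))
    (hY : Y ∈ relInterior (convexSubdiff ipM (specFn θ) X)) :
    GenTwiceDiff ipM (specFn θ) X Y := by
  have hfin' : IsFiniteAt (specFn θ) X := hfin
  obtain ⟨c, hc⟩ : ∃ c : ℝ, specFn θ X = (c : EReal) :=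
    ⟨(specFn θ X).toReal, (EReal.coe_toReal hfin'.1 hfin'.2).symm⟩
  have hYm := hY.1
  have hYX := subgrad_comm hsym X Y c hc hYm
  have hXT : (X.val)ᵀ = X.val := X.2
  have hYT : (Y.val)ᵀ = Y.val := Y.2
  obtain ⟨T, hTs, hTc⟩ := exists_decomp X.val hXT
  let S : Sym n → Matrix (Fin n) (Fin n) ℝ := fun W => T W.val * X.val - X.val * T W.val
  have hST : ∀ W, (S W)ᵀ = -S W := by
    intro W
    simp only [S, Matrix.transpose_sub, Matrix.transpose_mul, hTs W.val W.2, hXT, neg_sub]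
  let B : Sym n → Sym n := fun W => ⟨W.val - (S W * X.val - X.val * S W), by
    change (W.val - (S W * X.val - X.val * S W))ᵀ = W.val - (S W * X.val - X.val * S W)
    have hWT : (W.val)ᵀ = W.val := W.2
    simp only [Matrix.transpose_sub, Matrix.transpose_mul, hST W, hXT, hWT]
    noncomm_ring⟩
  have hBX : ∀ W, (B W).val * X.val = X.val * (B W).val := fun W => hTc W.val
  have hWB : ∀ W, W.val = (B W).val + (S W * X.val - X.val * S W) := by
    intro W
    simp [B]
  let L : Sym n → Sym n := fun W => ⟨S W * Y.val - Y.val * S W, by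
    change (S W * Y.val - Y.val * S W)ᵀ = S W * Y.val - Y.val * S W
    simp only [Matrix.transpose_sub, Matrix.transpose_mul, hST W, hYT]
    noncomm_ring⟩
  have hz : ∀ V W, (Y.val * (S V * (B W).val - (B W).val * S V)).trace = 0 := fun V W =>
    trace_comm_zero' X.val Y.val (B W).val (T V.val) hYX (hBX W)
  have hL : ∀ V W, ipM (L V) W = (Y.val * (W.val * S V - S V * W.val)).trace := fun V W =>
    trace_cyc Y.val W.val (S V)
  have hL2 : ∀ V W, ipM (L V) W = (Y.val * ((S W * X.val - X.val * S W) * S V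
      - S V * (S W * X.val - X.val * S W))).trace := by
    intro V W
    have e : W.val * S V - S V * W.val = ((S W * X.val - X.val * S W) * S V
        - S V * (S W * X.val - X.val * S W)) - (S V * (B W).val - (B W).val * S V) := by
      conv_lhs => rw [hWB W]
      noncomm_ring
    rw [hL, e, Matrix.mul_sub, Matrix.trace_sub, hz, sub_zero]
  have hcomm : ∀ V W : Sym n, ipM V W = ipM W V := fun V W => Matrix.trace_mul_comm _ _
  have hipB : ∀ Y' ∈ convexSubdiff ipM (specFn θ) X, ∀ W, ipM Y' (B W) = ipM Y' W := by
    intro Y' hY' W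
    have h := trace_comm_zero X.val Y'.val (S W) (subgrad_comm hsym X Y' c hc hY')
    have e : ipM Y' W = (Y'.val * ((B W).val + (S W * X.val - X.val * S W))).trace := by
      rw [← hWB W]
      rfl
    rw [e, Matrix.mul_add, Matrix.trace_add, h, add_zero]
    rfl
  have hq2 : ∀ W, (Y.val * (S W * S W * X.val + X.val * (S W * S W)
      - (2 : ℝ) • (S W * X.val * S W))).trace = -ipM (L W) W := by
    intro W
    rw [hL2, ← Matrix.trace_neg, ← Matrix.mul_neg, two_smul]
    congr 2
    noncomm_ring
  have hup : ∀ W, (∀ Y' ∈ convexSubdiff ipM (specFn θ) X, ipM Y' W = ipM Y W) →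
      ∃ Wt : ℝ → Sym n, Tendsto Wt (𝓝[>] 0) (𝓝 W) ∧
      Tendsto (fun t => sdq2 ipM (specFn θ) X Y t (Wt t)) (𝓝[>] 0)
        (𝓝 ((ipM (L W) W : ℝ) : EReal)) := by
    intro W hW
    refine second_upper hsym X Y W (B W) c hc (S W) (hST W) _ (hWB W) (hipB Y hYm W) ?_ (hz W W)
      (hq2 W)
    refine spec_dir hsym hproper.2 hpoly X Y (B W) c hc hYm (hBX W) fun Y' hY' => ?_
    rw [hipB Y' hY', hipB Y hYm, hW Y' hY']
  have hadd : ∀ Z V W : Sym n, ipM Z (V + W) = ipM Z V + ipM Z W := by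
    intro Z V W
    simp [ipM, Matrix.mul_add]
  have hsm : ∀ (Z : Sym n) (a : ℝ) (W : Sym n), ipM Z (a • W) = a * ipM Z W := by
    intro Z a W
    simp [ipM]
  refine gen_twice_diff_of X Y hfin'
    (fun W => ∀ Y' ∈ convexSubdiff ipM (specFn θ) X, ipM Y' W = ipM Y W)
    ?_ ?_ ?_ L ?_ ?_ ?_ ?_ hup ?_
  · intro Y' _
    simp [ipM]
  · intro V W hV hW Y' hY'
    rw [hadd, hadd, hV Y' hY', hW Y' hY']
  · intro a W hW Y' hY'
    rw [hsm, hsm, hW Y' hY']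
  · intro V W
    apply Subtype.ext
    have : S (V + W) = S V + S W := by
      simp only [S, Submodule.coe_add, map_add]
      noncomm_ring
    simp only [L, Submodule.coe_add, this]
    noncomm_ring
  · intro a W
    apply Subtype.ext
    have : S (a • W) = a • S W := by
      simp only [S, Submodule.coe_smul, map_smul, Matrix.smul_mul, Matrix.mul_smul, smul_sub]
    simp only [L, Submodule.coe_smul, this, Matrix.smul_mul, Matrix.mul_smul, smul_sub]
  · intro V W
    rw [hcomm V, hL2, hL2]
    exact trace_symm X.val Y.val (S V) (S W) hYX
  · intro W hW
    exact second_value X Y W _ (second_lower hsym X Y W c hc hYm hYX (S W) (hST W) _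
      (hL W W).symm (hq2 W)) (hup W hW)
  · intro W hW
    exact second_top X Y W c hc hY hW

end SpecPaper
end
end

section
/- Let θ : ℝⁿ → ℝ be symmetric, locally Lipschitz continuous around λ(X) and differentiable at λ(X), and let g = θ∘λ be the associated spectral function, so that g is differentiable at X with ∇g(X) = U·Diag(∇θ(λ(X)))·Uᵀ for any U ∈ Oⁿ(X). Then g is twice semidifferentiable at X if and only if θ is twice semidifferentiable at λ(X). Moreover, if either holds, then for every H ∈ Sⁿ, the second semiderivative satisfies d²g(X)(H) = d²θ(λ(X))(λ'(X;H)) + 2·∑_{m=1}^{r} ⟨Diag(y_{α_m}), U_{α_m}ᵀ·H·(μ_m·I − X)^†·H·U_{α_m}⟩ with y = ∇θ(λ(X)) and U ∈ Oⁿ(X), and d²g(X)(H) = d²g(X, ∇g(X))(H) for all H ∈ Sⁿ. -/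
open Filter Topology Matrix

noncomputable section

namespace SpecPaper

/-! ## Generic variational analysis definitions over a topological real vector space -/

variable {E : Type*}

lemma quad_diag {n : ℕ} (P : Matrix (Fin n) (Fin n) ℝ) (a x : Fin n → ℝ) :
    x ⬝ᵥ ((P * Matrix.diagonal a * Pᵀ) *ᵥ x) = ∑ i, a i * ((Pᵀ *ᵥ x) i) ^ 2 := by
  rw [← Matrix.mulVec_mulVec, ← Matrix.mulVec_mulVec, Matrix.dotProduct_mulVec,
    ← Matrix.mulVec_transpose]
  simp only [dotProduct, Matrix.mulVec_diagonal]
  exact Finset.sum_congr rfl fun i _ => by ring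

lemma quad_one {n : ℕ} (P : Matrix (Fin n) (Fin n) ℝ) (hP : P * Pᵀ = 1) (x : Fin n → ℝ) :
    x ⬝ᵥ x = ∑ i, ((Pᵀ *ᵥ x) i) ^ 2 := by
  have h := quad_diag P (fun _ => 1) x
  rw [show Matrix.diagonal (fun _ : Fin n => (1:ℝ)) = 1 from Matrix.diagonal_one,
    Matrix.mul_one, hP, Matrix.one_mulVec] at h
  simpa using h

/-- dimension count -/
lemma exists_common {n : ℕ} (P Q : Matrix (Fin n) (Fin n) ℝ)
    (p q : Finset (Fin n)) (hpq : n < p.card + q.card) :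
    ∃ x : Fin n → ℝ, x ≠ 0 ∧ (∀ i, i ∉ p → (Pᵀ *ᵥ x) i = 0) ∧
      (∀ i, i ∉ q → (Qᵀ *ᵥ x) i = 0) := by
  let f : (Fin n → ℝ) →ₗ[ℝ] (({i // i ∉ p} → ℝ) × ({i // i ∉ q} → ℝ)) :=
    LinearMap.prod
      ((LinearMap.funLeft ℝ ℝ (Subtype.val : {i // i ∉ p} → Fin n)).comp (Matrix.mulVecLin Pᵀ))
      ((LinearMap.funLeft ℝ ℝ (Subtype.val : {i // i ∉ q} → Fin n)).comp (Matrix.mulVecLin Qᵀ))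
  have hlt : Module.finrank ℝ (({i // i ∉ p} → ℝ) × ({i // i ∉ q} → ℝ)) <
      Module.finrank ℝ (Fin n → ℝ) := by
    have h1 : Fintype.card {i // i ∉ p} = n - p.card := by
      rw [Fintype.card_subtype_compl]; simp
    have h2 : Fintype.card {i // i ∉ q} = n - q.card := by
      rw [Fintype.card_subtype_compl]; simp
    have h3 := Finset.card_le_univ p
    have h4 := Finset.card_le_univ q
    simp only [Module.finrank_prod, Module.finrank_fintype_fun_eq_card, h1, h2, Fintype.card_fin] at *
    omega
  obtain ⟨x, hx, hx0⟩ := (Submodule.ne_bot_iff _).1 (LinearMap.ker_ne_bot_of_finrank_lt (f := f) hlt)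
  refine ⟨x, hx0, ?_, ?_⟩
  · intro i hi
    have := congrArg Prod.fst (LinearMap.mem_ker.1 hx)
    exact congrFun this ⟨i, hi⟩
  · intro i hi
    have := congrArg Prod.snd (LinearMap.mem_ker.1 hx)
    exact congrFun this ⟨i, hi⟩

lemma dot_self_pos {n : ℕ} {x : Fin n → ℝ} (hx : x ≠ 0) : 0 < x ⬝ᵥ x := by
  rcases (show 0 ≤ x ⬝ᵥ x from Finset.sum_nonneg fun i _ => mul_self_nonneg _).lt_or_eq with h | h
  · exact h
  · exact absurd (dotProduct_self_eq_zero.1 h.symm) hx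

/-- Ostrowski-type perturbation bound. -/
lemma ostrowski {n : ℕ} (A B S P Q : Matrix (Fin n) (Fin n) ℝ) (a b : Fin n → ℝ)
    (hP : P * Pᵀ = 1) (hQ : Q * Qᵀ = 1) (ha : Antitone a) (hb : Antitone b)
    (hA : A = P * Matrix.diagonal a * Pᵀ) (hB : B = Q * Matrix.diagonal b * Qᵀ) (ε δ : ℝ)
    (h1 : ∀ x, |x ⬝ᵥ (A *ᵥ x) - (S *ᵥ x) ⬝ᵥ (B *ᵥ (S *ᵥ x))| ≤ ε * (x ⬝ᵥ x))
    (h2 : ∀ x, |(S *ᵥ x) ⬝ᵥ (S *ᵥ x) - x ⬝ᵥ x| ≤ δ * (x ⬝ᵥ x)) (k : Fin n) :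
    |a k - b k| ≤ ε + δ * |b k| := by
  have key : ∀ x, |b k * ((S *ᵥ x) ⬝ᵥ (S *ᵥ x)) - b k * (x ⬝ᵥ x)| ≤ δ * |b k| * (x ⬝ᵥ x) := by
    intro x
    rw [← mul_sub, abs_mul]
    calc _ ≤ |b k| * (δ * (x ⬝ᵥ x)) := by gcongr; exact h2 x
      _ = _ := by ring
  rw [abs_le]
  constructor
  · obtain ⟨x, hx0, hx1, hx2⟩ := exists_common P (Sᵀ * Q) (Finset.Ici k) (Finset.Iic k) (by
      simp [Fin.card_Ici, Fin.card_Iic]; omega)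
    rw [Matrix.transpose_mul, Matrix.transpose_transpose, ← Matrix.mulVec_mulVec] at hx2
    have hpos := dot_self_pos hx0
    have e1 : x ⬝ᵥ (A *ᵥ x) ≤ a k * (x ⬝ᵥ x) := by
      rw [hA, quad_diag, quad_one P hP, Finset.mul_sum]
      refine Finset.sum_le_sum fun i _ => ?_
      by_cases hi : i ∈ Finset.Ici k
      · gcongr; exact ha (Finset.mem_Ici.1 hi)
      · rw [hx1 i hi]; simp
    have e2 : b k * ((S *ᵥ x) ⬝ᵥ (S *ᵥ x)) ≤ (S *ᵥ x) ⬝ᵥ (B *ᵥ (S *ᵥ x)) := by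
      rw [hB, quad_diag, quad_one Q hQ, Finset.mul_sum]
      refine Finset.sum_le_sum fun i _ => ?_
      by_cases hi : i ∈ Finset.Iic k
      · gcongr; exact hb (Finset.mem_Iic.1 hi)
      · rw [hx2 i hi]; simp
    have e3 := (abs_le.1 (key x)).1
    have e4 := (abs_le.1 (h1 x)).1
    have : 0 ≤ (a k - b k + (ε + δ * |b k|)) * (x ⬝ᵥ x) := by nlinarith
    have := nonneg_of_mul_nonneg_left this hpos
    linarith
  · obtain ⟨x, hx0, hx1, hx2⟩ := exists_common P (Sᵀ * Q) (Finset.Iic k) (Finset.Ici k) (by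
      simp [Fin.card_Ici, Fin.card_Iic]; omega)
    rw [Matrix.transpose_mul, Matrix.transpose_transpose, ← Matrix.mulVec_mulVec] at hx2
    have hpos := dot_self_pos hx0
    have e1 : a k * (x ⬝ᵥ x) ≤ x ⬝ᵥ (A *ᵥ x) := by
      rw [hA, quad_diag, quad_one P hP, Finset.mul_sum]
      refine Finset.sum_le_sum fun i _ => ?_
      by_cases hi : i ∈ Finset.Iic k
      · gcongr; exact ha (Finset.mem_Iic.1 hi)
      · rw [hx1 i hi]; simp
    have e2 : (S *ᵥ x) ⬝ᵥ (B *ᵥ (S *ᵥ x)) ≤ b k * ((S *ᵥ x) ⬝ᵥ (S *ᵥ x)) := by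
      rw [hB, quad_diag, quad_one Q hQ, Finset.mul_sum]
      refine Finset.sum_le_sum fun i _ => ?_
      by_cases hi : i ∈ Finset.Ici k
      · gcongr; exact hb (Finset.mem_Ici.1 hi)
      · rw [hx2 i hi]; simp
    have e3 := (abs_le.1 (key x)).2
    have e4 := (abs_le.1 (h1 x)).2
    have : 0 ≤ (b k - a k + (ε + δ * |b k|)) * (x ⬝ᵥ x) := by nlinarith
    have := nonneg_of_mul_nonneg_left this hpos
    linarith

/-- entrywise l1 size -/
def esize {n : ℕ} (M : Matrix (Fin n) (Fin n) ℝ) : ℝ := ∑ i, ∑ j, |M i j|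

lemma quad_le_esize {n : ℕ} (M : Matrix (Fin n) (Fin n) ℝ) (x : Fin n → ℝ) :
    |x ⬝ᵥ (M *ᵥ x)| ≤ esize M * (x ⬝ᵥ x) := by
  have hx : ∀ i, x i ^ 2 ≤ x ⬝ᵥ x := fun i => by
    have := Finset.single_le_sum (f := fun i => x i * x i) (fun i _ => mul_self_nonneg _)
      (Finset.mem_univ i)
    simpa [dotProduct, sq] using this
  have e : x ⬝ᵥ (M *ᵥ x) = ∑ i, ∑ j, x i * (M i j * x j) := by
    simp only [dotProduct, Matrix.mulVec, Finset.mul_sum]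
  rw [e]
  refine (Finset.abs_sum_le_sum_abs _ _).trans ?_
  unfold esize
  rw [Finset.sum_mul]
  refine Finset.sum_le_sum fun i _ => (Finset.abs_sum_le_sum_abs _ _).trans ?_
  rw [Finset.sum_mul]
  refine Finset.sum_le_sum fun j _ => ?_
  have : |x i * (M i j * x j)| = |M i j| * (|x i| * |x j|) := by
    rw [abs_mul, abs_mul]; ring
  rw [this]
  gcongr
  have h1 := hx i; have h2 := hx j
  have h3 := sq_nonneg (|x i| - |x j|)
  rw [← sq_abs] at h1 h2
  nlinarith

lemma esize_smul {n : ℕ} (c : ℝ) (M : Matrix (Fin n) (Fin n) ℝ) :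
    esize (c • M) = |c| * esize M := by
  simp [esize, abs_mul, Finset.mul_sum]

lemma continuous_esize {n : ℕ} : Continuous (esize (n := n)) := by
  unfold esize; fun_prop

lemma eigval_antitone {n : ℕ} (M : Matrix (Fin n) (Fin n) ℝ) : Antitone (eigval M) := by
  unfold eigval
  split_ifs with h
  · intro i j hij
    have := Tuple.monotone_sort (fun j => -h.eigenvalues j) hij
    simpa using this
  · intro i j _; simp

lemma conj_perm {n : ℕ} (P : Matrix (Fin n) (Fin n) ℝ) (d : Fin n → ℝ) (σ : Equiv.Perm (Fin n))
    (hP : P * Pᵀ = 1) :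
    (P.submatrix id σ) * (P.submatrix id σ)ᵀ = 1 ∧
    (P.submatrix id σ) * Matrix.diagonal (d ∘ σ) * (P.submatrix id σ)ᵀ =
      P * Matrix.diagonal d * Pᵀ := by
  constructor
  · rw [← hP]
    ext i j
    simp only [Matrix.mul_apply, Matrix.transpose_apply, Matrix.submatrix_apply, id]
    exact Equiv.sum_comp σ (fun k => P i k * P j k)
  · ext i j
    rw [Matrix.mul_apply, Matrix.mul_apply]
    simp only [Matrix.mul_diagonal, Matrix.transpose_apply,
      Matrix.submatrix_apply, id, Function.comp]
    exact Equiv.sum_comp σ (fun k => P i k * d k * P j k)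

lemma eigOrth_nonempty {n : ℕ} {M : Matrix (Fin n) (Fin n) ℝ} (hM : M.IsSymm) :
    ∃ U, U ∈ eigOrth M := by
  have h : M.IsHermitian := by rw [Matrix.IsHermitian, Matrix.conjTranspose_eq_transpose_of_trivial]; exact hM
  let P : Matrix (Fin n) (Fin n) ℝ := h.eigenvectorUnitary
  have hP : P * Pᵀ = 1 := by
    have := Matrix.mem_unitaryGroup_iff.1 h.eigenvectorUnitary.2
    rwa [Matrix.star_eq_conjTranspose, Matrix.conjTranspose_eq_transpose_of_trivial] at this
  have hs : M = P * Matrix.diagonal h.eigenvalues * Pᵀ := by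
    have := h.spectral_theorem
    rw [Unitary.conjStarAlgAut_apply] at this
    simpa [Matrix.star_eq_conjTranspose, Matrix.conjTranspose_eq_transpose_of_trivial] using this
  obtain ⟨h1, h2⟩ := conj_perm P h.eigenvalues (Tuple.sort (fun j => -h.eigenvalues j)) hP
  refine ⟨_, h1, ?_⟩
  have : eigval M = h.eigenvalues ∘ (Tuple.sort (fun j => -h.eigenvalues j)) := by
    unfold eigval; rw [dif_pos h]; rfl
  rw [this, h2, ← hs]

lemma eigval_pert {n : ℕ} {A B : Matrix (Fin n) (Fin n) ℝ} (hA : A.IsSymm) (hB : B.IsSymm)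
    (S : Matrix (Fin n) (Fin n) ℝ) (k : Fin n) :
    |eigval A k - eigval B k| ≤ esize (Sᵀ * B * S - A) + esize (Sᵀ * S - 1) * |eigval B k| := by
  obtain ⟨P, hP, hP'⟩ := eigOrth_nonempty hA
  obtain ⟨Q, hQ, hQ'⟩ := eigOrth_nonempty hB
  refine ostrowski A B S P Q _ _ hP hQ (eigval_antitone _) (eigval_antitone _) hP' hQ' _ _ ?_ ?_ k
  · intro x
    refine le_trans (le_of_eq ?_) (quad_le_esize _ x)
    rw [abs_sub_comm]
    congr 1
    rw [Matrix.sub_mulVec, dotProduct_sub, ← Matrix.mulVec_mulVec, ← Matrix.mulVec_mulVec,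
      Matrix.mulVec_transpose, dotProduct_comm x (_ ᵥ* S), ← Matrix.dotProduct_mulVec,
      dotProduct_comm (S *ᵥ x)]
  · intro x
    refine le_trans (le_of_eq ?_) (quad_le_esize _ x)
    congr 1
    rw [Matrix.sub_mulVec, dotProduct_sub, ← Matrix.mulVec_mulVec, Matrix.one_mulVec,
      Matrix.mulVec_transpose, dotProduct_comm x (_ ᵥ* S), ← Matrix.dotProduct_mulVec]

lemma diag_conj_symm {n : ℕ} (P : Matrix (Fin n) (Fin n) ℝ) (d : Fin n → ℝ) :
    (P * Matrix.diagonal d * Pᵀ).IsSymm := by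
  simp [Matrix.IsSymm, Matrix.transpose_mul, Matrix.mul_assoc]

lemma eigval_eq {n : ℕ} {M P : Matrix (Fin n) (Fin n) ℝ} {d : Fin n → ℝ}
    (hP : P * Pᵀ = 1) (hM : M = P * Matrix.diagonal d * Pᵀ) (hd : Antitone d) : eigval M = d := by
  obtain ⟨Q, hQ, hQ'⟩ := eigOrth_nonempty (M := M) (hM ▸ diag_conj_symm P d)
  ext k
  have := ostrowski M M 1 Q P _ _ hQ hP (eigval_antitone M) hd hQ' hM 0 0 (by simp) (by simp) k
  simp only [zero_mul, add_zero] at this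
  exact sub_eq_zero.1 (abs_eq_zero.1 (le_antisymm this (abs_nonneg _)))

lemma eigval_perm {n : ℕ} {M P : Matrix (Fin n) (Fin n) ℝ} {d : Fin n → ℝ}
    (hP : P * Pᵀ = 1) (hM : M = P * Matrix.diagonal d * Pᵀ) :
    ∃ σ : Equiv.Perm (Fin n), eigval M = d ∘ σ := by
  let σ := Tuple.sort (fun j => -d j)
  obtain ⟨h1, h2⟩ := conj_perm P d σ hP
  refine ⟨σ, eigval_eq h1 (hM.trans h2.symm) ?_⟩
  intro i j hij
  have := Tuple.monotone_sort (fun j => -d j) hij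
  simpa using this

lemma eigval_conj {n : ℕ} {M V : Matrix (Fin n) (Fin n) ℝ} (hM : M.IsSymm) (hV : V * Vᵀ = 1) :
    eigval (Vᵀ * M * V) = eigval M := by
  obtain ⟨P, hP, hP'⟩ := eigOrth_nonempty hM
  have hV' : Vᵀ * V = 1 := mul_eq_one_comm.1 hV
  refine eigval_eq (P := Vᵀ * P) ?_ ?_ (eigval_antitone M)
  · rw [Matrix.transpose_mul, Matrix.transpose_transpose, Matrix.mul_assoc, ← Matrix.mul_assoc P, hP,
      Matrix.one_mul, hV']
  · conv_lhs => rw [hP']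
    simp only [Matrix.transpose_mul, Matrix.transpose_transpose, Matrix.mul_assoc]

lemma eigval_tendsto {n : ℕ} {ι : Type*} {l : Filter ι} {F : ι → Matrix (Fin n) (Fin n) ℝ}
    {M : Matrix (Fin n) (Fin n) ℝ} (hF : ∀ i, (F i).IsSymm) (hM : M.IsSymm)
    (h : Tendsto F l (𝓝 M)) : Tendsto (fun i => eigval (F i)) l (𝓝 (eigval M)) := by
  rw [tendsto_pi_nhds]
  intro k
  rw [tendsto_iff_dist_tendsto_zero]
  have h0 : Tendsto (fun i => esize (M - F i)) l (𝓝 0) := by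
    have := (continuous_esize.tendsto _).comp (tendsto_const_nhds (x := M) |>.sub h)
    simpa [Function.comp_def, esize] using this
  refine squeeze_zero (fun _ => dist_nonneg) (fun i => ?_) h0
  have := eigval_pert (hF i) hM 1 k
  rw [Real.dist_eq]
  simpa [esize] using this


def fidx {n : ℕ} (s : Finset (Fin n)) (i : Fin n) (h : i ∈ s) : Fin s.card :=
  (s.orderIsoOfFin rfl).symm ⟨i, h⟩

def subM {n : ℕ} (G : Matrix (Fin n) (Fin n) ℝ) (s : Finset (Fin n)) :
    Matrix (Fin s.card) (Fin s.card) ℝ :=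
  Matrix.of fun a b => G (s.orderIsoOfFin rfl a : Fin n) (s.orderIsoOfFin rfl b : Fin n)

lemma sum_fidx {n : ℕ} (s : Finset (Fin n)) (f : Fin s.card → ℝ) :
    ∑ i, (if h : i ∈ s then f (fidx s i h) else 0) = ∑ a, f a := by
  rw [← Equiv.sum_comp (s.orderIsoOfFin rfl).toEquiv.symm f]
  rw [← Finset.sum_subset (Finset.subset_univ s) (fun i _ hi => by rw [dif_neg hi])]
  rw [← Finset.sum_coe_sort s]
  exact Finset.sum_congr rfl fun i _ => by rw [dif_pos i.2]; rfl

lemma subM_fidx {n : ℕ} (G : Matrix (Fin n) (Fin n) ℝ) (s : Finset (Fin n)) (i j : Fin n)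
    (hi : i ∈ s) (hj : j ∈ s) : subM G s (fidx s i hi) (fidx s j hj) = G i j := by
  unfold subM fidx
  rw [Matrix.of_apply, OrderIso.apply_symm_apply, OrderIso.apply_symm_apply]

lemma subM_symm {n : ℕ} {G : Matrix (Fin n) (Fin n) ℝ} (hG : G.IsSymm) (s : Finset (Fin n)) :
    (subM G s).IsSymm := by
  ext a b
  exact hG.apply _ _

lemma fidx_inj {n : ℕ} (s : Finset (Fin n)) (i j : Fin n) (hi : i ∈ s) (hj : j ∈ s) :
    fidx s i hi = fidx s j hj ↔ i = j := by
  simp [fidx]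

/-- blockwise ordered eigenvalues -/
def lamB {n : ℕ} (X M : Matrix (Fin n) (Fin n) ℝ) : Fin n → ℝ :=
  fun i => eigval (blockMat X M i) (blockIdx X i)

lemma mem_blockSet {n : ℕ} (X : Matrix (Fin n) (Fin n) ℝ) (i j : Fin n) :
    j ∈ blockSet X i ↔ eigval X j = eigval X i := by
  simp [blockSet]

lemma block_decomp {n : ℕ} (X G : Matrix (Fin n) (Fin n) ℝ) (hG : G.IsSymm)
    (hG0 : ∀ i j, eigval X i ≠ eigval X j → G i j = 0) :
    ∃ V : Matrix (Fin n) (Fin n) ℝ, V * Vᵀ = 1 ∧ G = V * Matrix.diagonal (lamB X G) * Vᵀ ∧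
      ∀ i j, eigval X i ≠ eigval X j → V i j = 0 := by
  choose W hW1 hW2 using fun s => eigOrth_nonempty (subM_symm hG s)
  have hW1' : ∀ s, (W s)ᵀ * W s = 1 := fun s => mul_eq_one_comm.1 (hW1 s)
  have hW3 : ∀ s, subM G s * W s = W s * Matrix.diagonal (eigval (subM G s)) := by
    intro s
    conv_lhs => rw [hW2 s]
    rw [Matrix.mul_assoc, hW1' s, Matrix.mul_one]
  let V : Matrix (Fin n) (Fin n) ℝ := Matrix.of fun i j =>
    if h : i ∈ blockSet X j then W (blockSet X j) (fidx (blockSet X j) i h) (blockIdx X j) else 0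
  have hV : ∀ j s, s = blockSet X j → ∀ hj : j ∈ s, ∀ i, V i j =
      if h : i ∈ s then W s (fidx s i h) (fidx s j hj) else 0 := by
    rintro j s rfl hj i
    rfl
  have hV0 : ∀ i j, eigval X i ≠ eigval X j → V i j = 0 := by
    intro i j hij
    rw [hV j _ rfl (mem_blockSet_self X j), dif_neg]
    rwa [mem_blockSet]
  have hVV : Vᵀ * V = 1 := by
    ext j k
    rw [Matrix.mul_apply]
    simp only [Matrix.transpose_apply]
    by_cases hjk : eigval X j = eigval X k
    · have hs : blockSet X j = blockSet X k := by
        ext i; simp [mem_blockSet, hjk]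
      have hj : j ∈ blockSet X k := by rwa [mem_blockSet]
      have hk := mem_blockSet_self X k
      have h1 := congrFun (congrFun (hW1' (blockSet X k)) (fidx _ j hj)) (fidx _ k hk)
      rw [Matrix.mul_apply, ← sum_fidx] at h1
      rw [Matrix.one_apply] at h1 ⊢
      simp only [fidx_inj] at h1
      rw [← h1]
      refine Finset.sum_congr rfl fun i _ => ?_
      rw [hV j _ hs.symm hj, hV k _ rfl hk]
      by_cases hi : i ∈ blockSet X k
      · simp [hi]
      · simp [hi]
    · rw [Matrix.one_apply_ne (fun h => hjk (by rw [h]))]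
      refine Finset.sum_eq_zero fun i _ => ?_
      by_cases h : eigval X i = eigval X j
      · rw [hV0 i k (by rw [h]; exact hjk), mul_zero]
      · rw [hV0 i j h, zero_mul]
  have hVV' : V * Vᵀ = 1 := mul_eq_one_comm.1 hVV
  have hGV : G * V = V * Matrix.diagonal (lamB X G) := by
    ext i j
    have hj := mem_blockSet_self X j
    rw [Matrix.mul_diagonal, Matrix.mul_apply]
    by_cases hi : i ∈ blockSet X j
    · have h1 := congrFun (congrFun (hW3 (blockSet X j)) (fidx _ i hi)) (fidx _ j hj)
      rw [Matrix.mul_diagonal, Matrix.mul_apply, ← sum_fidx] at h1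
      rw [hV j _ rfl hj i, dif_pos hi]
      refine Eq.trans ?_ h1
      refine Finset.sum_congr rfl fun k _ => ?_
      rw [hV j _ rfl hj k]
      by_cases hk : k ∈ blockSet X j
      · rw [dif_pos hk, dif_pos hk, subM_fidx]
      · rw [dif_neg hk, dif_neg hk, mul_zero]
    · rw [hV j _ rfl hj i, dif_neg hi, zero_mul]
      refine Finset.sum_eq_zero fun k _ => ?_
      rw [mem_blockSet] at hi
      by_cases h : eigval X k = eigval X j
      · rw [hG0 i k (by rw [h]; exact hi), zero_mul]
      · rw [hV0 k j h, mul_zero]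
  refine ⟨V, hVV', ?_, hV0⟩
  rw [← hGV, Matrix.mul_assoc, hVV', Matrix.mul_one]

lemma lamB_tendsto {n : ℕ} {ι : Type*} {l : Filter ι} (X : Matrix (Fin n) (Fin n) ℝ)
    {F : ι → Matrix (Fin n) (Fin n) ℝ}
    {M : Matrix (Fin n) (Fin n) ℝ} (hF : ∀ i, (F i).IsSymm) (hM : M.IsSymm)
    (h : Tendsto F l (𝓝 M)) : Tendsto (fun i => lamB X (F i)) l (𝓝 (lamB X M)) := by
  rw [tendsto_pi_nhds]
  intro k
  have h1 : Tendsto (fun i => subM (F i) (blockSet X k)) l (𝓝 (subM M (blockSet X k))) := by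
    have : Continuous (fun M : Matrix (Fin n) (Fin n) ℝ => subM M (blockSet X k)) := by
      unfold subM; fun_prop
    exact (this.tendsto M).comp h
  exact (tendsto_pi_nhds.1 (eigval_tendsto (fun i => subM_symm (hF i) _) (subM_symm hM _) h1))
    (blockIdx X k)

open scoped Classical in
/-- inverse gaps -/
def gapc {n : ℕ} (l : Fin n → ℝ) (i j : Fin n) : ℝ := if l i = l j then 0 else (l i - l j)⁻¹

lemma gapc_anti {n : ℕ} (l : Fin n → ℝ) (i j : Fin n) : gapc l j i = - gapc l i j := by
  unfold gapc
  by_cases h : l i = l j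
  · simp [h]
  · rw [if_neg h, if_neg (fun h' => h h'.symm), ← neg_sub, inv_neg]

lemma gapc_sq {n : ℕ} (l : Fin n → ℝ) (i j : Fin n) :
    (l i - l j) * gapc l i j ^ 2 = gapc l i j := by
  unfold gapc
  by_cases h : l i = l j
  · simp [h]
  · rw [if_neg h]
    have := sub_ne_zero.2 h
    field_simp

lemma gapc_mul {n : ℕ} (l : Fin n → ℝ) (i j : Fin n) (h : l i ≠ l j) :
    (l i - l j) * gapc l i j = 1 := by
  unfold gapc
  rw [if_neg h, mul_inv_cancel₀ (sub_ne_zero.2 h)]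

lemma gapc_congr {n : ℕ} (l : Fin n → ℝ) (i j k : Fin n) (h : l i = l j) :
    gapc l i k = gapc l j k := by
  unfold gapc; rw [h]

abbrev Mat (n : ℕ) := Matrix (Fin n) (Fin n) ℝ

def KK {n : ℕ} (l : Fin n → ℝ) (H : Mat n) : Mat n := Matrix.of fun i j => - gapc l i j * H i j
def RR {n : ℕ} (l : Fin n → ℝ) (H : Mat n) : Mat n :=
  (1/2 : ℝ) • (KK l H * KK l H * Matrix.diagonal l + Matrix.diagonal l * (KK l H * KK l H))
    - KK l H * Matrix.diagonal l * KK l H + H * KK l H - KK l H * H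
def LL {n : ℕ} (l : Fin n → ℝ) (H : Mat n) : Mat n :=
  Matrix.of fun i j => - gapc l i j * RR l H i j
open scoped Classical in
def D1 {n : ℕ} (l : Fin n → ℝ) (H : Mat n) : Mat n := Matrix.of fun i j =>
  if l i = l j then H i j else 0
open scoped Classical in
def D2 {n : ℕ} (l : Fin n → ℝ) (H : Mat n) : Mat n := Matrix.of fun i j =>
  if l i = l j then ∑ k, gapc l i k * H i k * H k j else 0

lemma KK_tr {n : ℕ} (l : Fin n → ℝ) {H : Mat n} (hH : H.IsSymm) : (KK l H)ᵀ = - KK l H := by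
  ext i j
  simp [KK, gapc_anti l i j, hH.apply i j]

lemma RR_tr {n : ℕ} (l : Fin n → ℝ) {H : Mat n} (hH : H.IsSymm) : (RR l H)ᵀ = RR l H := by
  unfold RR
  simp only [Matrix.transpose_sub, Matrix.transpose_add, Matrix.transpose_smul,
    Matrix.transpose_mul, KK_tr l hH, hH.eq, Matrix.diagonal_transpose, Matrix.mul_neg,
    Matrix.neg_mul, neg_neg, Matrix.mul_assoc]
  abel_nf

lemma LL_tr {n : ℕ} (l : Fin n → ℝ) {H : Mat n} (hH : H.IsSymm) : (LL l H)ᵀ = - LL l H := by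
  ext i j
  have : RR l H j i = RR l H i j := congrFun (congrFun (RR_tr l hH) i) j
  simp [LL, gapc_anti l i j, this]

lemma id1 {n : ℕ} (l : Fin n → ℝ) (H : Mat n) :
    H + Matrix.diagonal l * KK l H - KK l H * Matrix.diagonal l = D1 l H := by
  ext i j
  simp only [Matrix.sub_apply, Matrix.add_apply, Matrix.diagonal_mul, Matrix.mul_diagonal, KK, D1,
    Matrix.of_apply]
  split_ifs with h
  · rw [h]; ring
  · have := gapc_mul l i j h
    linear_combination (- H i j) * this

lemma id2 {n : ℕ} (l : Fin n → ℝ) {H : Mat n} :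
    RR l H + Matrix.diagonal l * LL l H - LL l H * Matrix.diagonal l = D2 l H := by
  ext i j
  simp only [Matrix.sub_apply, Matrix.add_apply, Matrix.diagonal_mul, Matrix.mul_diagonal, LL, D2,
    Matrix.of_apply]
  split_ifs with h
  · rw [h]
    have : RR l H i j = ∑ k, gapc l i k * H i k * H k j := by
      have e : RR l H i j = ∑ k, ((1/2:ℝ) * (KK l H i k * KK l H k j * l j +
          l i * (KK l H i k * KK l H k j)) - KK l H i k * l k * KK l H k j
          + H i k * KK l H k j - KK l H i k * H k j) := by
        unfold RR
        simp only [Matrix.sub_apply, Matrix.add_apply, Matrix.smul_apply, Matrix.diagonal_mul,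
          Matrix.mul_diagonal, smul_eq_mul]
        rw [Matrix.mul_apply (N := KK l H), Matrix.mul_apply (M := KK l H * Matrix.diagonal l),
          Matrix.mul_apply (M := H), Matrix.mul_apply (N := H)]
        simp only [Matrix.mul_diagonal, Finset.sum_sub_distrib, Finset.sum_add_distrib,
          ← Finset.mul_sum, Finset.sum_mul]
      rw [e]
      refine Finset.sum_congr rfl fun k _ => ?_
      have h1 : gapc l k j = - gapc l i k := by
        rw [gapc_anti l j k, gapc_congr l i j k h]
      simp only [KK, Matrix.of_apply, h1]
      rw [← h]
      have h2 := gapc_sq l i k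
      linear_combination (- H i k * H k j) * h2
    rw [this]; ring
  · have := gapc_mul l i j h
    linear_combination (- RR l H i j) * this

def MM {n : ℕ} (l : Fin n → ℝ) (H : Mat n) : Mat n := (1/2:ℝ) • (KK l H * KK l H) + LL l H
def MT {n : ℕ} (l : Fin n → ℝ) (H : Mat n) : Mat n := (1/2:ℝ) • (KK l H * KK l H) - LL l H
def SS {n : ℕ} (l : Fin n → ℝ) (t : ℝ) (H : Mat n) : Mat n := 1 + t • KK l H + t ^ 2 • MM l H

def P1 {n : ℕ} (l : Fin n → ℝ) (t : ℝ) (H : Mat n) : Mat n :=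
  (MT l H * Matrix.diagonal l * KK l H - KK l H * Matrix.diagonal l * MM l H + MT l H * H
    + H * MM l H - KK l H * H * KK l H)
  + t • (MT l H * Matrix.diagonal l * MM l H - KK l H * H * MM l H + MT l H * H * KK l H)
  + t ^ 2 • (MT l H * H * MM l H)
def P2 {n : ℕ} (l : Fin n → ℝ) (t : ℝ) (H : Mat n) : Mat n :=
  (MT l H * KK l H - KK l H * MM l H) + t • (MT l H * MM l H)

lemma SS_tr {n : ℕ} (l : Fin n → ℝ) (t : ℝ) {H : Mat n} (hH : H.IsSymm) :
    (SS l t H)ᵀ = 1 - t • KK l H + t ^ 2 • MT l H := by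
  unfold SS MM MT
  simp only [Matrix.transpose_add, Matrix.transpose_smul, Matrix.transpose_mul, KK_tr l hH,
    LL_tr l hH, Matrix.transpose_one, Matrix.mul_neg, Matrix.neg_mul, neg_neg]
  module

lemma expand2 {n : ℕ} (l : Fin n → ℝ) (t : ℝ) {H : Mat n} (hH : H.IsSymm) :
    (SS l t H)ᵀ * SS l t H - 1 = t ^ 3 • P2 l t H := by
  rw [SS_tr l t hH]
  have hM : MM l H + MT l H = KK l H * KK l H := by unfold MM MT; module
  have : (1 - t • KK l H + t ^ 2 • MT l H) * SS l t H - 1 =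
     t ^ 2 • (MM l H + MT l H - KK l H * KK l H) + t ^ 3 • P2 l t H := by
    unfold SS P2
    simp only [add_mul, mul_add, sub_mul, mul_sub, Matrix.smul_mul, Matrix.mul_smul, Matrix.one_mul, Matrix.mul_one,
      Matrix.mul_assoc]
    module
  rw [this, hM]; simp

lemma expand1 {n : ℕ} (l : Fin n → ℝ) (t : ℝ) {H : Mat n} (hH : H.IsSymm) :
    (SS l t H)ᵀ * (Matrix.diagonal l + t • H) * SS l t H
      - (Matrix.diagonal l + t • (D1 l H + t • D2 l H)) = t ^ 3 • P1 l t H := by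
  rw [SS_tr l t hH, ← id1, ← id2]
  generalize hΛ : Matrix.diagonal l = Λ
  have : (1 - t • KK l H + t ^ 2 • MT l H) * (Λ + t • H) * SS l t H -
      (Λ + t • (H + Λ * KK l H - KK l H * Λ + t • (RR l H + Λ * LL l H - LL l H * Λ)))
      - t ^ 3 • P1 l t H =
     t ^ 2 • (MT l H * Λ + Λ * MM l H - KK l H * Λ * KK l H + H * KK l H - KK l H * H
       - (RR l H + Λ * LL l H - LL l H * Λ)) := by
    unfold SS P1
    rw [hΛ]
    simp only [add_mul, mul_add, sub_mul, mul_sub, Matrix.smul_mul, Matrix.mul_smul, Matrix.one_mul, Matrix.mul_one,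
      Matrix.mul_assoc]
    module
  rw [← sub_eq_zero, this]
  convert smul_zero (t^2) using 2
  unfold MM MT RR
  rw [hΛ]
  simp only [add_mul, mul_add, sub_mul, mul_sub, Matrix.smul_mul, Matrix.mul_smul, Matrix.mul_assoc]
  module

lemma cont_KK {n : ℕ} (l : Fin n → ℝ) : Continuous (KK l : Mat n → Mat n) := by
  unfold KK; fun_prop
lemma cont_RR {n : ℕ} (l : Fin n → ℝ) : Continuous (RR l : Mat n → Mat n) := by
  have := cont_KK l
  unfold RR; fun_prop
lemma cont_LL {n : ℕ} (l : Fin n → ℝ) : Continuous (LL l : Mat n → Mat n) := by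
  have := cont_RR l
  unfold LL
  refine continuous_matrix fun i j => ?_
  exact continuous_const.mul ((continuous_apply j).comp ((continuous_apply i).comp this))
lemma cont_MM {n : ℕ} (l : Fin n → ℝ) : Continuous (MM l : Mat n → Mat n) := by
  have := cont_KK l
  have := cont_LL l
  unfold MM; fun_prop
lemma cont_MT {n : ℕ} (l : Fin n → ℝ) : Continuous (MT l : Mat n → Mat n) := by
  have := cont_KK l
  have := cont_LL l
  unfold MT; fun_prop
lemma cont_D1 {n : ℕ} (l : Fin n → ℝ) : Continuous (D1 l : Mat n → Mat n) := by
  unfold D1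
  refine continuous_matrix fun i j => ?_
  simp only [Matrix.of_apply]
  split_ifs <;> fun_prop
lemma cont_D2 {n : ℕ} (l : Fin n → ℝ) : Continuous (D2 l : Mat n → Mat n) := by
  unfold D2
  refine continuous_matrix fun i j => ?_
  simp only [Matrix.of_apply]
  split_ifs <;> fun_prop
lemma cont_P1 {n : ℕ} (l : Fin n → ℝ) : Continuous (fun p : ℝ × Mat n => P1 l p.1 p.2) := by
  have := cont_KK l
  have := cont_MM l
  have := cont_MT l
  unfold P1; fun_prop
lemma cont_P2 {n : ℕ} (l : Fin n → ℝ) : Continuous (fun p : ℝ × Mat n => P2 l p.1 p.2) := by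
  have := cont_KK l
  have := cont_MM l
  have := cont_MT l
  unfold P2; fun_prop

lemma D1_symm {n : ℕ} (l : Fin n → ℝ) {H : Mat n} (hH : H.IsSymm) : (D1 l H).IsSymm := by
  ext i j
  simp only [Matrix.transpose_apply, D1, Matrix.of_apply, hH.apply i j, eq_comm]

lemma D2_symm {n : ℕ} (l : Fin n → ℝ) {H : Mat n} (hH : H.IsSymm) : (D2 l H).IsSymm := by
  ext i j
  simp only [Matrix.transpose_apply, D2, Matrix.of_apply]
  by_cases h : l i = l j
  · rw [if_pos h, if_pos h.symm]
    refine Finset.sum_congr rfl fun k _ => ?_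
    rw [gapc_congr l i j k h, hH.apply k j, hH.apply i k]
    ring
  · rw [if_neg h, if_neg (fun h' => h h'.symm)]

/-- the block diagonal second order model -/
def GG {n : ℕ} (l : Fin n → ℝ) (t : ℝ) (H : Mat n) : Mat n := D1 l H + t • D2 l H

lemma GG_symm {n : ℕ} (l : Fin n → ℝ) (t : ℝ) {H : Mat n} (hH : H.IsSymm) :
    (GG l t H).IsSymm := (D1_symm l hH).add ((D2_symm l hH).smul t)

lemma GG_zero {n : ℕ} (l : Fin n → ℝ) (t : ℝ) (H : Mat n) (i j : Fin n) (h : l i ≠ l j) :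
    GG l t H i j = 0 := by
  simp [GG, D1, D2, h]

lemma cont_GG {n : ℕ} (l : Fin n → ℝ) : Continuous (fun p : ℝ × Mat n => GG l p.1 p.2) := by
  have := cont_D1 l
  have := cont_D2 l
  unfold GG; fun_prop


section gen
variable {E : Type*} [AddCommGroup E] [Module ℝ E] [TopologicalSpace E]

/-- Regularity facts on an inner product. -/
structure GoodIp (ip : E → E → ℝ) : Prop where
  smul : ∀ g (t : ℝ) w, ip g (t • w) = t * ip g w
  smul' : ∀ (t : ℝ) w, ip (t • w) (t • w) = t ^ 2 * ip w w
  nn : ∀ w, 0 ≤ ip w w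
  def0 : ∀ w, ip w w = 0 → w = 0
  cont : ∀ g, Continuous (ip g)
  cont' : Continuous (fun w => ip w w)

lemma prod_tendsto_zero (w : E) [ContinuousSMul ℝ E] [ContinuousAdd E] (x : E) :
    Tendsto (fun p : ℝ × E => x + p.1 • p.2) (nhdsWithin (0:ℝ) (Set.Ioi 0) ×ˢ 𝓝 w) (𝓝 x) := by
  have h : Tendsto (fun p : ℝ × E => x + p.1 • p.2) (𝓝 ((0:ℝ), w)) (𝓝 (x + (0:ℝ) • w)) :=
    (by fun_prop : Continuous (fun p : ℝ × E => x + p.1 • p.2)).tendsto _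
  rw [zero_smul, add_zero, nhds_prod_eq] at h
  exact h.mono_left (Filter.prod_mono nhdsWithin_le_nhds le_rfl)

lemma grad_semi [ContinuousSMul ℝ E] [ContinuousAdd E] {ip : E → E → ℝ} (hip : GoodIp ip)
    {f : E → ℝ} {x g : E}
    (h : HasGradAt ip f x g) (w : E) :
    Tendsto (fun p : ℝ × E => (p.1)⁻¹ * (f (x + p.1 • p.2) - f x))
      ((nhdsWithin (0 : ℝ) (Set.Ioi 0)) ×ˢ nhds w) (nhds (ip g w)) := by
  set φ : E → ℝ := fun y => (nrm ip (y - x))⁻¹ * (f y - f x - ip g (y - x)) with hφ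
  have hz : ∀ g, ip g 0 = 0 := fun g => by simpa using hip.smul g 0 0
  have h0 : φ x = 0 := by simp [hφ, hz]
  have h1 : Tendsto φ (𝓝 x) (𝓝 0) := by
    rw [← h0]
    apply continuousAt_iff_punctured_nhds.2
    rw [h0]; exact h
  have h2 := h1.comp (prod_tendsto_zero w x)
  have hn : Continuous (nrm ip) := Real.continuous_sqrt.comp hip.cont'
  have h3 : Tendsto (fun p : ℝ × E => nrm ip p.2) ((nhdsWithin (0 : ℝ) (Set.Ioi 0)) ×ˢ nhds w)
      (𝓝 (nrm ip w)) := (hn.tendsto w).comp tendsto_snd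
  have h4 : Tendsto (fun p : ℝ × E => ip g p.2) ((nhdsWithin (0 : ℝ) (Set.Ioi 0)) ×ˢ nhds w)
      (𝓝 (ip g w)) := ((hip.cont g).tendsto w).comp tendsto_snd
  have h5 := (h2.mul h3).add h4
  rw [zero_mul, zero_add] at h5
  refine h5.congr' ?_
  have hpos : ∀ᶠ p : ℝ × E in (nhdsWithin (0 : ℝ) (Set.Ioi 0)) ×ˢ nhds w, 0 < p.1 :=
    tendsto_fst.eventually self_mem_nhdsWithin
  filter_upwards [hpos] with p hp
  simp only [Function.comp, hφ, add_sub_cancel_left, hip.smul]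
  have hnn : nrm ip (p.1 • p.2) = p.1 * nrm ip p.2 := by
    unfold nrm
    rw [hip.smul', Real.sqrt_mul (sq_nonneg _), Real.sqrt_sq hp.le]
  by_cases hp2 : p.2 = 0
  · simp [hp2, hz]
  · have : nrm ip p.2 ≠ 0 := by
      intro h
      exact hp2 (hip.def0 _ ((Real.sqrt_eq_zero (hip.nn _)).1 h))
    rw [hnn]
    field_simp
    ring

lemma grad_dReal [ContinuousSMul ℝ E] [ContinuousAdd E] {ip : E → E → ℝ} (hip : GoodIp ip)
    {f : E → ℝ} {x g : E}
    (h : HasGradAt ip f x g) (w : E) : dReal f x w = ip g w := by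
  unfold dReal subderiv
  have h1 := (continuous_coe_real_ereal.tendsto _).comp (grad_semi hip h w)
  have h2 : (fun p : ℝ × E => (((p.1)⁻¹ : ℝ) : EReal) *
      (((f (x + p.1 • p.2) : ℝ) : EReal) - ((f x : ℝ) : EReal))) =
      Real.toEReal ∘ (fun p : ℝ × E => (p.1)⁻¹ * (f (x + p.1 • p.2) - f x)) := by
    ext p
    simp [EReal.coe_mul, EReal.coe_sub]
  rw [h2, h1.liminf_eq, EReal.toReal_coe]

/-- real quotient -/
def QQ (ip : E → E → ℝ) (f : E → ℝ) (x g : E) (p : ℝ × E) : ℝ :=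
  (2 / p.1 ^ 2) * (f (x + p.1 • p.2) - f x - p.1 * ip g p.2)

lemma sdq_eq [ContinuousSMul ℝ E] [ContinuousAdd E] {ip : E → E → ℝ} (hip : GoodIp ip)
    {f : E → ℝ} {x g : E}
    (h : HasGradAt ip f x g) : (fun p : ℝ × E => sdq2R f x p.1 p.2) = QQ ip f x g := by
  ext p
  rw [sdq2R, grad_dReal hip h, QQ]

lemma tsd_iff [ContinuousSMul ℝ E] [ContinuousAdd E] {ip : E → E → ℝ} (hip : GoodIp ip)
    {f : E → ℝ} {x g : E}
    (h : HasGradAt ip f x g) : TwiceSemiDiffAt f x ↔ ∀ w, ∃ d : ℝ, Tendsto (QQ ip f x g)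
      ((nhdsWithin (0 : ℝ) (Set.Ioi 0)) ×ˢ nhds w) (𝓝 d) := by
  unfold TwiceSemiDiffAt
  rw [sdq_eq hip h]
  exact ⟨fun h => h.2, fun h' => ⟨fun w => ⟨_, grad_semi hip h w⟩, h'⟩⟩

lemma ssd_eq [ContinuousSMul ℝ E] [ContinuousAdd E] {ip : E → E → ℝ} (hip : GoodIp ip)
    {f : E → ℝ} {x g w : E} {d : ℝ}
    (h : HasGradAt ip f x g) (hd : Tendsto (QQ ip f x g)
      ((nhdsWithin (0 : ℝ) (Set.Ioi 0)) ×ˢ nhds w) (𝓝 d)) : secondSemiDeriv f x w = d := by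
  unfold secondSemiDeriv
  have h1 := (continuous_coe_real_ereal.tendsto _).comp hd
  rw [← sdq_eq hip h] at h1
  exact h1.liminf_eq

lemma sub2_eq [ContinuousSMul ℝ E] [ContinuousAdd E] {ip : E → E → ℝ} (hip : GoodIp ip)
    {f : E → ℝ} {x g w : E}
    (h : HasGradAt ip f x g) :
    secondSemiDeriv f x w = subderiv2 ip (fun y => ((f y : ℝ) : EReal)) x g w := by
  unfold secondSemiDeriv subderiv2
  congr 1
  ext p
  rw [congrFun (sdq_eq hip h) p, QQ, sdq2]
  simp [EReal.coe_mul, EReal.coe_sub]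

end gen

lemma goodV {n : ℕ} : GoodIp (ipV (n := n)) where
  smul g t w := by simp [ipV, Finset.mul_sum]; exact Finset.sum_congr rfl fun i _ => by ring
  smul' t w := by simp [ipV, Finset.mul_sum]; exact Finset.sum_congr rfl fun i _ => by ring
  nn w := Finset.sum_nonneg fun i _ => mul_self_nonneg _
  def0 w h := dotProduct_self_eq_zero.1 h
  cont g := by unfold ipV; fun_prop
  cont' := by unfold ipV; fun_prop

lemma ipM_self {n : ℕ} (A : Sym n) : ipM A A = ∑ i, ∑ j, A.val i j ^ 2 := by
  simp only [ipM, Matrix.trace, Matrix.diag, Matrix.mul_apply]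
  refine Finset.sum_congr rfl fun i _ => Finset.sum_congr rfl fun j _ => ?_
  have : A.val.IsSymm := A.2
  rw [this.apply i j, sq]

lemma goodM {n : ℕ} : GoodIp (ipM (n := n)) where
  smul g t w := by simp [ipM]
  smul' t w := by simp [ipM]; ring
  nn w := by rw [ipM_self]; positivity
  def0 w h := by
    rw [ipM_self, Finset.sum_eq_zero_iff_of_nonneg (fun i _ => by positivity)] at h
    ext i j
    have := h i (Finset.mem_univ _)
    rw [Finset.sum_eq_zero_iff_of_nonneg (fun i _ => by positivity)] at this
    simpa using this j (Finset.mem_univ _)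
  cont g := by unfold ipM; fun_prop
  cont' := by unfold ipM; fun_prop

/-- the gradient of a symmetric function is constant on blocks -/
lemma grad_block {n : ℕ} {θ : (Fin n → ℝ) → ℝ} {l y : Fin n → ℝ} (hsym : SymmetricFn θ)
    (h : HasGradAt ipV θ l y) (i j : Fin n) (hij : l i = l j) : y i = y j := by
  have hl : Tendsto (fun t : ℝ => (t, (Pi.single i 1 : Fin n → ℝ))) (nhdsWithin (0:ℝ) (Set.Ioi 0))
      (nhdsWithin (0:ℝ) (Set.Ioi 0) ×ˢ 𝓝 (Pi.single i 1)) :=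
    tendsto_id.prodMk tendsto_const_nhds
  have hl' : Tendsto (fun t : ℝ => (t, (Pi.single j 1 : Fin n → ℝ))) (nhdsWithin (0:ℝ) (Set.Ioi 0))
      (nhdsWithin (0:ℝ) (Set.Ioi 0) ×ˢ 𝓝 (Pi.single j 1)) :=
    tendsto_id.prodMk tendsto_const_nhds
  have h1 := (grad_semi goodV h (Pi.single i 1)).comp hl
  have h2 := (grad_semi goodV h (Pi.single j 1)).comp hl'
  have e : ∀ t : ℝ, θ (l + t • (Pi.single i 1 : Fin n → ℝ)) = θ (l + t • (Pi.single j 1 : Fin n → ℝ)) := by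
    intro t
    rw [← hsym (l + t • (Pi.single j 1 : Fin n → ℝ)) (Equiv.swap i j)]
    congr 1
    ext k
    simp only [Pi.add_apply, Pi.smul_apply, Pi.single_apply, smul_eq_mul]
    by_cases hi : k = i
    · subst hi; simp [hij]
    · by_cases hj : k = j
      · subst hj; simp [hij, hi]; intro h; exact absurd h.symm hi
      · rw [Equiv.swap_apply_of_ne_of_ne hi hj]; simp [hi, hj]
  simp only [Function.comp_def, e] at h1 h2
  have := tendsto_nhds_unique h1 h2
  simpa [ipV, Pi.single_apply] using this

lemma pinv_unique {n : ℕ} {A B : Mat n} (h1 : A * B * A = A) (h2 : B * A * B = B)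
    (h3 : (A * B)ᵀ = A * B) (h4 : (B * A)ᵀ = B * A) : pinv A = B := by
  have hex : ∃ B : Matrix (Fin n) (Fin n) ℝ,
      A * B * A = A ∧ B * A * B = B ∧ (A * B)ᵀ = A * B ∧ (B * A)ᵀ = B * A := ⟨B, h1, h2, h3, h4⟩
  have e : pinv A = hex.choose := by unfold pinv; rw [dif_pos hex]
  rw [e]
  obtain ⟨c1, c2, c3, c4⟩ := hex.choose_spec
  generalize hex.choose = C at *
  have hAB : A * C = A * B := by
    calc A * C = (A * C)ᵀ := c3.symm
      _ = ((A * B) * (A * C))ᵀ := by rw [← Matrix.mul_assoc, h1]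
      _ = (A * C)ᵀ * (A * B)ᵀ := Matrix.transpose_mul _ _
      _ = A * C * (A * B) := by rw [c3, h3]
      _ = A * B := by rw [← Matrix.mul_assoc, c1]
  have hBA : C * A = B * A := by
    calc C * A = (C * A)ᵀ := c4.symm
      _ = ((C * A) * (B * A))ᵀ := by rw [Matrix.mul_assoc C, ← Matrix.mul_assoc A, h1]
      _ = (B * A)ᵀ * (C * A)ᵀ := Matrix.transpose_mul _ _
      _ = B * A * (C * A) := by rw [c4, h4]
      _ = B * A := by rw [Matrix.mul_assoc B, ← Matrix.mul_assoc A, c1]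
  calc C = C * A * C := c2.symm
    _ = B * (A * C) := by rw [hBA, Matrix.mul_assoc]
    _ = B * (A * B) := by rw [hAB]
    _ = B := by rw [← Matrix.mul_assoc, h2]

lemma pinv_formula {n : ℕ} {X U : Mat n} (hU : U ∈ eigOrth X) (i : Fin n) :
    pinv (eigval X i • (1 : Mat n) - X) =
      U * Matrix.diagonal (fun k => gapc (eigval X) i k) * Uᵀ := by
  obtain ⟨h1, h2⟩ := hU
  have h1' : Uᵀ * U = 1 := mul_eq_one_comm.1 h1
  set l := eigval X with hl
  have hm : ∀ a b : Fin n → ℝ, (U * Matrix.diagonal a * Uᵀ) * (U * Matrix.diagonal b * Uᵀ) =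
      U * Matrix.diagonal (fun k => a k * b k) * Uᵀ := by
    intro a b
    calc _ = U * Matrix.diagonal a * (Uᵀ * U) * Matrix.diagonal b * Uᵀ := by
          simp only [Matrix.mul_assoc]
      _ = _ := by rw [h1', Matrix.mul_one, Matrix.mul_assoc U, Matrix.diagonal_mul_diagonal]
  have hA : l i • (1 : Mat n) - X = U * Matrix.diagonal (fun k => l i - l k) * Uᵀ := by
    have : Matrix.diagonal (fun k => l i - l k) = l i • (1 : Mat n) - Matrix.diagonal l := by
      rw [← Matrix.diagonal_one, ← Matrix.diagonal_smul, Matrix.diagonal_sub]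
      congr 1; ext k; simp
    rw [this, Matrix.mul_sub, Matrix.sub_mul, ← h2]
    simp [h1]
  rw [hA]
  apply pinv_unique
  · rw [hm, hm]
    congr 3
    ext k
    by_cases h : l i = l k
    · simp [h]
    · rw [gapc_mul l i k h, one_mul]
  · rw [hm, hm]
    congr 3
    ext k
    linear_combination gapc_sq l i k
  · rw [hm]; exact diag_conj_symm _ _
  · rw [hm]; exact diag_conj_symm _ _


lemma diag_add_smul {n : ℕ} (a b : Fin n → ℝ) (t : ℝ) :
    (Matrix.diagonal (a + t • b) : Mat n) = Matrix.diagonal a + t • Matrix.diagonal b := by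
  ext i j
  by_cases h : i = j <;> simp [h, Matrix.diagonal_apply]

lemma conj_const {n : ℕ} {l z : Fin n → ℝ} {V : Mat n} (hV : V * Vᵀ = 1)
    (hV0 : ∀ i j, l i ≠ l j → V i j = 0) (hz : ∀ i j, l i = l j → z i = z j) :
    V * Matrix.diagonal z * Vᵀ = Matrix.diagonal z := by
  have : V * Matrix.diagonal z = Matrix.diagonal z * V := by
    ext i j
    rw [Matrix.mul_diagonal, Matrix.diagonal_mul]
    by_cases h : l i = l j
    · rw [hz i j h, mul_comm]
    · rw [hV0 i j h]; ring
  rw [this, Matrix.mul_assoc, hV, Matrix.mul_one]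

lemma theta_model {n : ℕ} {θ : (Fin n → ℝ) → ℝ} (hsym : SymmetricFn θ) (X G : Mat n)
    (hG : G.IsSymm) (hG0 : ∀ i j, eigval X i ≠ eigval X j → G i j = 0) (t : ℝ) :
    θ (eigval (Matrix.diagonal (eigval X) + t • G)) = θ (eigval X + t • lamB X G) := by
  obtain ⟨V, hV, hVG, hV0⟩ := block_decomp X G hG hG0
  have h1 := conj_const (l := eigval X) (z := eigval X) hV hV0 (fun _ _ h => h)
  have h2 : Matrix.diagonal (eigval X) + t • G =
      V * Matrix.diagonal (eigval X + t • lamB X G) * Vᵀ := by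
    rw [diag_add_smul, Matrix.mul_add, Matrix.add_mul, h1,
      Matrix.mul_smul, Matrix.smul_mul, ← hVG]
  obtain ⟨σ, hσ⟩ := eigval_perm hV h2
  rw [hσ]
  exact hsym _ σ

lemma trace_model {n : ℕ} {y : Fin n → ℝ} (X G : Mat n)
    (hG : G.IsSymm) (hG0 : ∀ i j, eigval X i ≠ eigval X j → G i j = 0)
    (hy : ∀ i j, eigval X i = eigval X j → y i = y j) :
    ipV y (lamB X G) = ∑ i, y i * G i i := by
  obtain ⟨V, hV, hVG, hV0⟩ := block_decomp X G hG hG0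
  have hV' : Vᵀ * V = 1 := mul_eq_one_comm.1 hV
  have h1 := conj_const (l := eigval X) hV hV0 hy
  have h2 : Vᵀ * G * V = Matrix.diagonal (lamB X G) := by
    conv_lhs => rw [hVG]
    rw [Matrix.mul_assoc, Matrix.mul_assoc, hV', Matrix.mul_one, ← Matrix.mul_assoc, hV',
      Matrix.one_mul]
  calc ipV y (lamB X G) = (Matrix.diagonal y * Matrix.diagonal (lamB X G)).trace := by
        simp [ipV, Matrix.trace]
    _ = (Matrix.diagonal y * (Vᵀ * G * V)).trace := by rw [h2]
    _ = ((V * Matrix.diagonal y * Vᵀ) * G).trace := by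
        rw [← Matrix.mul_assoc, Matrix.trace_mul_comm]
        simp only [Matrix.mul_assoc]
    _ = (Matrix.diagonal y * G).trace := by rw [h1]
    _ = _ := by simp [Matrix.trace]

lemma curv_eq {n : ℕ} {X U : Mat n} (hU : U ∈ eigOrth X) (H : Mat n) (y : Fin n → ℝ) :
    curvTerm X U H y = 2 * ∑ i, y i * D2 (eigval X) (Uᵀ * H * U) i i := by
  unfold curvTerm
  congr 1
  refine Finset.sum_congr rfl fun i _ => ?_
  congr 1
  rw [pinv_formula hU]
  have : Uᵀ * (H * (U * Matrix.diagonal (fun k => gapc (eigval X) i k) * Uᵀ) * H) * U =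
      (Uᵀ * H * U) * Matrix.diagonal (fun k => gapc (eigval X) i k) * (Uᵀ * H * U) := by
    simp only [Matrix.mul_assoc]
  rw [this, Matrix.mul_apply]
  simp only [Matrix.mul_diagonal, D2, Matrix.of_apply, if_true]
  exact Finset.sum_congr rfl fun k _ => by ring

lemma conj_symm {n : ℕ} (U : Mat n) {H : Mat n} (hH : H.IsSymm) : (Uᵀ * H * U).IsSymm := by
  simp [Matrix.IsSymm, Matrix.transpose_mul, hH.eq, Matrix.mul_assoc]

lemma nrm_le {n : ℕ} (d : Fin n → ℝ) : nrm ipV d ≤ ∑ i, |d i| := by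
  unfold nrm ipV
  rw [Real.sqrt_le_iff]
  refine ⟨Finset.sum_nonneg fun i _ => abs_nonneg _, ?_⟩
  have := Finset.sum_sq_le_sq_sum_of_nonneg (s := Finset.univ) (f := fun i => |d i|) (fun i _ => abs_nonneg _)
  simpa [sq] using this

lemma lamB_GG_zero {n : ℕ} (X H : Mat n) : lamB X (GG (eigval X) 0 H) = lamB X H := by
  ext i
  unfold lamB
  congr 1
  ext a b
  have h : ∀ a, eigval X (blockEmb X i a) = eigval X i := fun a =>
    (mem_blockSet X i _).1 ((blockSet X i).orderIsoOfFin rfl a).2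
  simp [blockMat, GG, D1, h]

section main
variable {n : ℕ} (θ : (Fin n → ℝ) → ℝ) (X Y : Sym n) (U : Mat n) (y : Fin n → ℝ)

def wmod (X : Sym n) (U : Mat n) (p : ℝ × Sym n) : Fin n → ℝ :=
  lamB X.val (GG (eigval X.val) p.1 (Uᵀ * p.2.val * U))

abbrev FF {E : Type*} [TopologicalSpace E] (w : E) : Filter (ℝ × E) :=
  (nhdsWithin (0 : ℝ) (Set.Ioi 0)) ×ˢ nhds w

lemma FF_le {E : Type*} [TopologicalSpace E] (w : E) : FF w ≤ 𝓝 ((0:ℝ), w) := by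
  rw [nhds_prod_eq]; exact Filter.prod_mono nhdsWithin_le_nhds le_rfl

lemma FF_pos {E : Type*} [TopologicalSpace E] (w : E) : ∀ᶠ p in FF w, 0 < p.1 :=
  tendsto_fst.eventually self_mem_nhdsWithin

lemma wmod_tendsto (H : Sym n) :
    Tendsto (wmod X U) (FF H) (𝓝 (lambdaDir X.val U H.val)) := by
  have h0 : lambdaDir X.val U H.val = lamB X.val (GG (eigval X.val) 0 (Uᵀ * H.val * U)) := by
    rw [lamB_GG_zero]; rfl
  rw [h0]
  refine lamB_tendsto X.val (F := fun p : ℝ × Sym n => GG (eigval X.val) p.1 (Uᵀ * p.2.val * U))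
    (fun p => GG_symm _ _ (conj_symm U p.2.2)) (GG_symm _ _ (conj_symm U H.2)) ?_
  have hc : Continuous (fun p : ℝ × Sym n => GG (eigval X.val) p.1 (Uᵀ * p.2.val * U)) :=
    (cont_GG (eigval X.val)).comp (f := fun p : ℝ × Sym n => (p.1, Uᵀ * p.2.val * U)) (by fun_prop)
  exact (hc.tendsto ((0:ℝ), H)).mono_left (FF_le H)

variable {θ X Y U y}

lemma err_tendsto (hsym : SymmetricFn θ) (hLip : LocLipAt ipV θ (eigval X.val))
    (hU : U ∈ eigOrth X.val) (H : Sym n) :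
    Tendsto (fun p : ℝ × Sym n => (2 / p.1 ^ 2) *
      (θ (eigval (X + p.1 • p.2).val) - θ (eigval X.val + p.1 • wmod X U p))) (FF H) (𝓝 0) := by
  set l := eigval X.val with hl
  obtain ⟨hU1, hU2⟩ := hU
  have hU1' : Uᵀ * U = 1 := mul_eq_one_comm.1 hU1
  let Hh : ℝ × Sym n → Mat n := fun p => Uᵀ * p.2.val * U
  have hHh : Continuous Hh := by simp only [Hh]; fun_prop
  have hHs : ∀ p, (Hh p).IsSymm := fun p => conj_symm U p.2.2
  let Ah : ℝ × Sym n → Mat n := fun p => Matrix.diagonal l + p.1 • Hh p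
  let N : ℝ × Sym n → Mat n := fun p => Matrix.diagonal l + p.1 • GG l p.1 (Hh p)
  have hAs : ∀ p, (Ah p).IsSymm := fun p => (Matrix.isSymm_diagonal l).add ((hHs p).smul _)
  have hNs : ∀ p, (N p).IsSymm := fun p =>
    (Matrix.isSymm_diagonal l).add ((GG_symm _ _ (hHs p)).smul _)
  have hAc : Continuous Ah := by simp only [Ah]; fun_prop
  have hNc : Continuous N := by
    have : Continuous (fun p : ℝ × Sym n => GG l p.1 (Hh p)) :=
      (cont_GG l).comp (f := fun p : ℝ × Sym n => (p.1, Hh p)) (by fun_prop)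
    simp only [N]; fun_prop
  have heigΛ : eigval (Matrix.diagonal l) = l :=
    eigval_eq (P := 1) (by simp) (by simp) (eigval_antitone _)
  have hA1 : Tendsto (fun p => eigval (Ah p)) (FF H) (𝓝 l) := by
    have := eigval_tendsto hAs (Matrix.isSymm_diagonal l) (M := Matrix.diagonal l) (l := FF H) (by
      have := (hAc.tendsto ((0:ℝ), H)).mono_left (FF_le H)
      simpa [Ah] using this)
    rwa [heigΛ] at this
  have hN1 : Tendsto (fun p => eigval (N p)) (FF H) (𝓝 l) := by
    have := eigval_tendsto hNs (Matrix.isSymm_diagonal l) (M := Matrix.diagonal l) (l := FF H) (by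
      have := (hNc.tendsto ((0:ℝ), H)).mono_left (FF_le H)
      simpa [N] using this)
    rwa [heigΛ] at this
  have hA2 : ∀ p : ℝ × Sym n, eigval (X + p.1 • p.2).val = eigval (Ah p) := by
    intro p
    rw [← eigval_conj (X + p.1 • p.2).2 hU1]
    congr 1
    have e : (X + p.1 • p.2).val = X.val + p.1 • p.2.val := rfl
    rw [e, Matrix.mul_add, Matrix.add_mul]
    congr 1
    · conv_lhs => rw [hU2]
      rw [Matrix.mul_assoc, Matrix.mul_assoc, hU1', Matrix.mul_one, ← Matrix.mul_assoc, hU1',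
        Matrix.one_mul]
    · simp [Hh]
  have hN2 : ∀ p : ℝ × Sym n, θ (l + p.1 • wmod X U p) = θ (eigval (N p)) := by
    intro p
    exact (theta_model hsym X.val _ (GG_symm _ _ (hHs p)) (fun i j h => GG_zero _ _ _ i j h) p.1).symm
  let C : ℝ × Sym n → ℝ := fun p => ∑ k, (esize (P1 l p.1 (Hh p)) +
    esize (P2 l p.1 (Hh p)) * |eigval (Ah p) k|)
  have hC : Tendsto C (FF H) (𝓝 (∑ k, (esize (P1 l 0 (Hh (0, H))) +
      esize (P2 l 0 (Hh (0, H))) * |l k|))) := by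
    refine tendsto_finset_sum _ fun k _ => ?_
    have c1 : Continuous (fun p : ℝ × Sym n => esize (P1 l p.1 (Hh p))) :=
      continuous_esize.comp ((cont_P1 l).comp (f := fun p : ℝ × Sym n => (p.1, Hh p)) (by fun_prop))
    have c2 : Continuous (fun p : ℝ × Sym n => esize (P2 l p.1 (Hh p))) :=
      continuous_esize.comp ((cont_P2 l).comp (f := fun p : ℝ × Sym n => (p.1, Hh p)) (by fun_prop))
    exact ((c1.tendsto ((0:ℝ), H)).mono_left (FF_le H)).add
      (((c2.tendsto ((0:ℝ), H)).mono_left (FF_le H)).mul (tendsto_pi_nhds.1 hA1 k).abs)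
  obtain ⟨W, hW, L, hL, hWL⟩ := hLip
  have ht : Tendsto (fun p : ℝ × Sym n => p.1) (FF H) (𝓝 0) :=
    tendsto_fst.mono_right nhdsWithin_le_nhds
  have hlim : Tendsto (fun p : ℝ × Sym n => 2 * L * p.1 * C p) (FF H) (𝓝 0) := by
    have := (ht.const_mul (2 * L)).mul hC
    simpa using this
  refine squeeze_zero_norm' ?_ hlim
  filter_upwards [FF_pos H, hA1 hW, hN1 hW] with p hp h1 h2
  rw [hA2, hN2, Real.norm_eq_abs, abs_mul, abs_of_pos (by positivity : 0 < 2 / p.1 ^ 2)]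
  have hb : |θ (eigval (Ah p)) - θ (eigval (N p))| ≤ L * (p.1 ^ 3 * C p) := by
    refine (hWL _ h1 _ h2).trans ?_
    gcongr
    refine (nrm_le _).trans ?_
    simp only [C, Finset.mul_sum]
    refine Finset.sum_le_sum fun k _ => ?_
    have := eigval_pert (hNs p) (hAs p) (SS l p.1 (Hh p)) k
    rw [expand2 l p.1 (hHs p)] at this
    have e1 := expand1 l p.1 (hHs p)
    change _ - N p = _ at e1
    change _ ≤ esize ((SS l p.1 (Hh p))ᵀ * (Matrix.diagonal l + p.1 • Hh p) * SS l p.1 (Hh p) - N p) + _ at this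
    rw [e1, esize_smul, esize_smul, abs_of_pos (by positivity : 0 < p.1 ^ 3)] at this
    rw [Pi.sub_apply, abs_sub_comm]
    refine this.trans (le_of_eq (by ring))
  calc 2 / p.1 ^ 2 * |θ (eigval (Ah p)) - θ (eigval (N p))|
      ≤ 2 / p.1 ^ 2 * (L * (p.1 ^ 3 * C p)) := by gcongr
    _ = 2 * L * p.1 * C p := by field_simp

lemma QQ_expand (hsym : SymmetricFn θ) (hgradθ : HasGradAt ipV θ (eigval X.val) y)
    (hU : U ∈ eigOrth X.val) (hYdec : Y.val = U * Matrix.diagonal y * Uᵀ)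
    (p : ℝ × Sym n) (hp : 0 < p.1) :
    QQ ipM (fun A : Sym n => θ (eigval A.val)) X Y p =
      QQ ipV θ (eigval X.val) y (p.1, wmod X U p) + curvTerm X.val U p.2.val y
      + (2 / p.1 ^ 2) *
      (θ (eigval (X + p.1 • p.2).val) - θ (eigval X.val + p.1 • wmod X U p)) := by
  have h1 : ipM Y p.2 = ∑ i, y i * (Uᵀ * p.2.val * U) i i := by
    unfold ipM
    rw [hYdec]
    have : (U * Matrix.diagonal y * Uᵀ * p.2.val).trace =
        (Matrix.diagonal y * (Uᵀ * p.2.val * U)).trace := by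
      rw [Matrix.mul_assoc, Matrix.mul_assoc, Matrix.trace_mul_comm]
      simp only [Matrix.mul_assoc]
    rw [this]
    simp [Matrix.trace]
  have h2 : ipV y (wmod X U p) = ipM Y p.2 + p.1 / 2 * curvTerm X.val U p.2.val y := by
    rw [wmod, trace_model X.val _ (GG_symm _ _ (conj_symm U p.2.2))
      (fun i j h => GG_zero _ _ _ i j h) (fun i j h => grad_block hsym hgradθ i j h), h1,
      curv_eq hU, Finset.mul_sum, Finset.mul_sum, ← Finset.sum_add_distrib]
    refine Finset.sum_congr rfl fun i _ => ?_
    simp only [GG, Matrix.add_apply, Matrix.smul_apply, smul_eq_mul]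
    have : D1 (eigval X.val) (Uᵀ * p.2.val * U) i i = (Uᵀ * p.2.val * U) i i := by simp [D1]
    rw [this]
    ring
  unfold QQ
  simp only
  rw [h2]
  field_simp
  ring

lemma forward (hsym : SymmetricFn θ)
    (hLip : LocLipAt ipV θ (eigval X.val))
    (hgradθ : HasGradAt ipV θ (eigval X.val) y)
    (hU : U ∈ eigOrth X.val)
    (hYdec : Y.val = U * Matrix.diagonal y * Uᵀ) (H : Sym n) (d : ℝ)
    (hd : Tendsto (QQ ipV θ (eigval X.val) y) (FF (lambdaDir X.val U H.val)) (𝓝 d)) :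
    Tendsto (QQ ipM (fun A : Sym n => θ (eigval A.val)) X Y) (FF H)
      (𝓝 (d + curvTerm X.val U H.val y)) := by
  have h1 : Tendsto (fun p : ℝ × Sym n => (p.1, wmod X U p)) (FF H)
      (FF (lambdaDir X.val U H.val)) := tendsto_fst.prodMk (wmod_tendsto X U H)
  have hc : Continuous (fun A : Sym n => curvTerm X.val U A.val y) := by
    unfold curvTerm; fun_prop
  have h2 : Tendsto (fun p : ℝ × Sym n => curvTerm X.val U p.2.val y) (FF H)
      (𝓝 (curvTerm X.val U H.val y)) := (hc.tendsto H).comp tendsto_snd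
  have h3 := ((hd.comp h1).add h2).add (err_tendsto hsym hLip hU H)
  rw [add_zero] at h3
  refine h3.congr' ?_
  filter_upwards [FF_pos H] with p hp
  exact (QQ_expand hsym hgradθ hU hYdec p hp).symm

lemma backward (hsym : SymmetricFn θ)
    (hU : U ∈ eigOrth X.val)
    (hYdec : Y.val = U * Matrix.diagonal y * Uᵀ) (w : Fin n → ℝ) :
    ∃ H : Sym n, ∀ d : ℝ,
    Tendsto (QQ ipM (fun A : Sym n => θ (eigval A.val)) X Y) (FF H) (𝓝 d) →
    Tendsto (QQ ipV θ (eigval X.val) y) (FF w) (𝓝 d) := by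
  obtain ⟨hU1, hU2⟩ := hU
  have hU1' : Uᵀ * U = 1 := mul_eq_one_comm.1 hU1
  let T : (Fin n → ℝ) → Sym n := fun v => ⟨U * Matrix.diagonal v * Uᵀ, diag_conj_symm U v⟩
  have hT : Continuous T := by
    refine Continuous.subtype_mk ?_ _
    fun_prop
  refine ⟨T w, fun d hd => ?_⟩
  have h1 : Tendsto (fun p : ℝ × (Fin n → ℝ) => (p.1, T p.2)) (FF w) (FF (T w)) :=
    tendsto_fst.prodMk ((hT.tendsto w).comp tendsto_snd)
  refine (hd.comp h1).congr fun p => ?_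
  simp only [Function.comp, QQ]
  have e1 : θ (eigval (X + p.1 • T p.2).val) = θ (eigval X.val + p.1 • p.2) := by
    have e : (X + p.1 • T p.2).val = U * Matrix.diagonal (eigval X.val + p.1 • p.2) * Uᵀ := by
      have e : (X + p.1 • T p.2).val = X.val + p.1 • (U * Matrix.diagonal p.2 * Uᵀ) := rfl
      rw [e, diag_add_smul, Matrix.mul_add, Matrix.add_mul, ← hU2,
        Matrix.mul_smul, Matrix.smul_mul]
    obtain ⟨σ, hσ⟩ := eigval_perm hU1 e
    rw [hσ]
    exact hsym _ σ
  have e2 : ipM Y (T p.2) = ipV y p.2 := by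
    unfold ipM
    rw [hYdec]
    have : U * Matrix.diagonal y * Uᵀ * (T p.2).val =
        U * (Matrix.diagonal y * (Uᵀ * U) * Matrix.diagonal p.2 * Uᵀ) := by
      simp only [T, Matrix.mul_assoc]
    rw [this, Matrix.trace_mul_comm, Matrix.mul_assoc _ Uᵀ, hU1', Matrix.mul_one, Matrix.mul_one]
    simp [ipV, Matrix.trace]
  rw [e1, e2]

end main

theorem twice_semidiff_spectral {n : ℕ} (θ : (Fin n → ℝ) → ℝ)
    (X Y : Sym n) (U : Matrix (Fin n) (Fin n) ℝ) (y : Fin n → ℝ)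
    (hsym : SymmetricFn θ)
    (hLip : LocLipAt ipV θ (eigval X.val))
    (hgradθ : HasGradAt ipV θ (eigval X.val) y)
    (hU : U ∈ eigOrth X.val)
    (hYdec : Y.val = U * Matrix.diagonal y * Uᵀ)
    (hgradg : HasGradAt ipM (fun A : Sym n => θ (eigval A.val)) X Y) :
    (TwiceSemiDiffAt (fun A : Sym n => θ (eigval A.val)) X ↔
      TwiceSemiDiffAt θ (eigval X.val)) ∧
    (TwiceSemiDiffAt (fun A : Sym n => θ (eigval A.val)) X →
      ∀ H : Sym n,
        secondSemiDeriv (fun A : Sym n => θ (eigval A.val)) X H =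
          secondSemiDeriv θ (eigval X.val) (lambdaDir X.val U H.val)
            + ((curvTerm X.val U H.val y : ℝ) : EReal) ∧
        secondSemiDeriv (fun A : Sym n => θ (eigval A.val)) X H =
          subderiv2 ipM (fun A : Sym n => ((θ (eigval A.val) : ℝ) : EReal)) X Y H) := by
  have hb : TwiceSemiDiffAt (fun A : Sym n => θ (eigval A.val)) X →
      TwiceSemiDiffAt θ (eigval X.val) := by
    rw [tsd_iff goodM hgradg, tsd_iff goodV hgradθ]
    intro h w
    obtain ⟨H, hH⟩ := backward hsym hU hYdec w
    obtain ⟨d, hd⟩ := h H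
    exact ⟨d, hH d hd⟩
  refine ⟨⟨hb, ?_⟩, ?_⟩
  · rw [tsd_iff goodM hgradg, tsd_iff goodV hgradθ]
    intro h H
    obtain ⟨d, hd⟩ := h (lambdaDir X.val U H.val)
    exact ⟨_, forward hsym hLip hgradθ hU hYdec H d hd⟩
  · intro h H
    have hθ := hb h
    rw [tsd_iff goodV hgradθ] at hθ
    obtain ⟨d, hd⟩ := hθ (lambdaDir X.val U H.val)
    refine ⟨?_, sub2_eq goodM hgradg⟩
    rw [ssd_eq goodM hgradg (forward hsym hLip hgradθ hU hYdec H d hd), ssd_eq goodV hgradθ hd,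
      EReal.coe_add]


end SpecPaper
end
end
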